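/- arXiv:2501.19193 — 6 statements merged into one kernel-verified Lean document; each statement's English description precedes it below -/
import Mathlib

section
/- For every positive integer n, the convex hull of H_n ∩ ℤ² has at least 2·n^{1/3} − 2 vertices. -/
/-!
The vertices are exhibited explicitly. For an integer `a ≥ 1` with `a ^ 3 ≤ n`, let `b = ⌈n / a⌉`.
The second difference of `x ↦ n / x` at `a` is `2 n / (a (a ^ 2 - 1)) ≥ 2`, which is more than
rounding up can destroy: with slope `s = n / (a (a + 1)) + 1` the linear functional `y + s x` has a
strict minimum over the lattice points of `H_n` at `(a, b)` (`functional_lt`). Hence `(a, b)` is a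
vertex (`mem_extremePoints_of_strict_min`), and by symmetry so is `(b, a)`.

With `k = ⌊n ^ (1 / 3)⌋` this gives `2 k ≥ 2 n ^ (1 / 3) - 2` vertices. They are distinct when
`n ≥ 2`, since `(a, b) = (b', a')` would give `k ^ 3 ≤ n ≤ a a' ≤ k ^ 2`. Counting with `ncard` also
needs finiteness: a vertex has both coordinates at most `n`, because a lattice point with a
coordinate exceeding `n` is the midpoint of two other lattice points of `H_n`.
-/

noncomputable section

/-- The closed region on and above the positive branch of the hyperbola `x*y = n`. -/
def Hset (n : ℝ) : Set (ℝ × ℝ) := {q | 0 ≤ q.1 ∧ 0 ≤ q.2 ∧ n ≤ q.1 * q.2}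

/-- The integer lattice `ℤ² ⊂ ℝ²`. -/
def intLattice : Set (ℝ × ℝ) := {q | ∃ a b : ℤ, q = ((a : ℝ), (b : ℝ))}

theorem mem_extremePoints_of_strict_min {S : Set (ℝ × ℝ)} {p : ℝ × ℝ} (hp : p ∈ S) (s t : ℝ)
    (h : ∀ q ∈ S, q ≠ p → s * p.1 + t * p.2 < s * q.1 + t * q.2) :
    p ∈ Set.extremePoints ℝ (convexHull ℝ S) := by
  -- The point `p` together with the open half-plane beyond it is convex, so it contains the hull.
  have hsub : convexHull ℝ S ⊆ {q | q = p ∨ s * p.1 + t * p.2 < s * q.1 + t * q.2} := by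
    refine convexHull_min (fun q hq => ?_) ?_
    · by_cases hqp : q = p
      · exact Or.inl hqp
      · exact Or.inr (h q hq hqp)
    · rw [convex_iff_forall_pos]
      rintro x hx y hy α β hα hβ hαβ
      have hβ' : β = 1 - α := by linarith
      subst hβ'
      simp only [Set.mem_ofPred_eq, Prod.fst_add, Prod.snd_add, Prod.smul_fst, Prod.smul_snd,
        smul_eq_mul] at hx hy ⊢
      rcases hx with rfl | hx <;> rcases hy with rfl | hy
      · left; rw [← add_smul]; simp
      · right; nlinarith
      · right; nlinarith
      · right; nlinarith
  rw [mem_extremePoints_iff_left]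
  refine ⟨subset_convexHull ℝ S hp, ?_⟩
  rintro x hx y hy ⟨α, β, hα, hβ, hαβ, hxy⟩
  rcases hsub hx with rfl | hx
  · rfl
  · exfalso
    have hβ' : β = 1 - α := by linarith
    subst hβ'
    have hy' : s * p.1 + t * p.2 ≤ s * y.1 + t * y.2 := by
      rcases hsub hy with rfl | hy
      · exact le_rfl
      · exact le_of_lt hy
    have h1 : α * x.1 + (1 - α) * y.1 = p.1 := by rw [← hxy]; simp
    have h2 : α * x.2 + (1 - α) * y.2 = p.2 := by rw [← hxy]; simp
    have h3 : s * p.1 + t * p.2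
        = α * (s * x.1 + t * x.2) + (1 - α) * (s * y.1 + t * y.2) := by
      linear_combination (-s) * h1 - t * h2
    nlinarith

/-- The slope of a supporting line of the hull at the lattice point `(a, ⌈n / a⌉)`. -/
def supportSlope (n a : ℕ) : ℝ := (n : ℝ) / (a * (a + 1)) + 1

/-- The functional `y + s x` is strictly smaller at `(a, b)` than at any other lattice point of
`H_n`. The hypothesis `hb'` says `b ≤ ⌈n / a⌉`. -/
theorem functional_lt {n a b : ℕ} (hn : 0 < n) (ha : 0 < a) (han : a ^ 3 ≤ n)
    (hb' : a * b < n + a) {x y : ℤ} (hx : 0 ≤ x) (hxy : (n : ℤ) ≤ x * y)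
    (hne : ¬ (x = a ∧ y = b)) :
    supportSlope n a * a + b < supportSlope n a * x + y := by
  have hx0 : 0 < x := by
    rcases hx.lt_or_eq with h | h
    · exact h
    · subst h; simp at hxy; omega
  rcases eq_or_ne x (a : ℤ) with hxa | hxa
  · subst hxa
    have : (b : ℤ) < y := by
      have : (b : ℤ) ≤ y := by
        by_contra! hlt
        have h1 : y + 1 ≤ (b : ℤ) := hlt
        have h2 : (a : ℤ) * (y + 1) ≤ a * b := by gcongr
        have h3 : (a : ℤ) * b < n + a := by exact_mod_cast hb'
        linarith
      rcases this.lt_or_eq with h | h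
      · exact h
      · exact absurd ⟨rfl, h.symm⟩ hne
    have : (b : ℝ) < y := by exact_mod_cast this
    simpa using this
  · have haR : (0 : ℝ) < a := by exact_mod_cast ha
    have hxR : (0 : ℝ) < x := by exact_mod_cast hx0
    have hnR : (0 : ℝ) < n := by exact_mod_cast hn
    have hanR : (a : ℝ) ^ 3 ≤ n := by exact_mod_cast han
    have hbR : (b : ℝ) < n / a + 1 := by
      have : (a : ℝ) * b < n + a := by exact_mod_cast hb'
      rw [div_add_one haR.ne', lt_div_iff₀ haR]; linarith
    have hyR : (n : ℝ) / x ≤ y := by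
      rw [div_le_iff₀ hxR]
      have : (n : ℝ) ≤ x * y := by exact_mod_cast hxy
      linarith
    -- Since `n / x - n / a = (a - x) * (n / (a x))`, this says that `n / x + s x` exceeds
    -- `n / a + s a` by at least `1`, which absorbs the rounding in `b`.
    have key : 1 ≤ ((a : ℝ) - x) * (n / (a * x) - supportSlope n a) := by
      rcases lt_or_gt_of_ne hxa with hlt | hgt
      · have h1 : (x : ℝ) + 1 ≤ a := by exact_mod_cast hlt
        have h2 : 1 ≤ (n : ℝ) / (a * x) - supportSlope n a := by
          unfold supportSlope
          have h3 : (n : ℝ) / (a * (a - 1)) ≤ n / (a * x) := by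
            gcongr; linarith
          have h4 : (n : ℝ) / (a * (a + 1)) + 2 ≤ n / (a * (a - 1)) := by
            have h5 : (0 : ℝ) < a - 1 := by linarith
            rw [div_add' _ _ _ (by positivity), div_le_div_iff₀ (by positivity) (by positivity)]
            have : 0 ≤ 2 * (a : ℝ) * (n - (a ^ 3 - a)) := by
              have : 0 ≤ (n : ℝ) - (a ^ 3 - a) := by linarith
              positivity
            nlinarith
          linarith
        nlinarith
      · have h1 : (a : ℝ) + 1 ≤ x := by exact_mod_cast hgt
        have h2 : 1 ≤ supportSlope n a - (n : ℝ) / (a * x) := by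
          unfold supportSlope
          have h3 : (n : ℝ) / (a * x) ≤ n / (a * (a + 1)) := by gcongr
          linarith
        nlinarith
    have hid : ((a : ℝ) - x) * (n / (a * x)) = n / x - n / a := by
      field_simp
    nlinarith

/-- The conditions `hb` and `hb'` say `b = ⌈n / a⌉`. -/
theorem lattice_vertex {n a b : ℕ} (hn : 0 < n) (ha : 0 < a) (han : a ^ 3 ≤ n) (hb : n ≤ a * b)
    (hb' : a * b < n + a) :
    ((a : ℝ), (b : ℝ)) ∈ Set.extremePoints ℝ (convexHull ℝ (Hset n ∩ intLattice)) := by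
  refine mem_extremePoints_of_strict_min ⟨⟨?_, ?_, ?_⟩, a, b, by simp⟩ (supportSlope n a) 1 ?_
  · positivity
  · positivity
  · dsimp only; exact_mod_cast hb
  · rintro _ ⟨⟨h1, h2, h3⟩, x, y, rfl⟩ hne
    dsimp only at h1 h2 h3
    have := functional_lt hn ha han hb' (x := x) (y := y) (by exact_mod_cast h1)
      (by exact_mod_cast h3) (by rintro ⟨rfl, rfl⟩; simp at hne)
    simpa using this

theorem lattice_vertex_swap {n a b : ℕ} (hn : 0 < n) (ha : 0 < a) (han : a ^ 3 ≤ n)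
    (hb : n ≤ a * b) (hb' : a * b < n + a) :
    ((b : ℝ), (a : ℝ)) ∈ Set.extremePoints ℝ (convexHull ℝ (Hset n ∩ intLattice)) := by
  refine mem_extremePoints_of_strict_min ⟨⟨?_, ?_, ?_⟩, b, a, by simp⟩ 1 (supportSlope n a) ?_
  · positivity
  · positivity
  · dsimp only; rw [mul_comm]; exact_mod_cast hb
  · rintro _ ⟨⟨h1, h2, h3⟩, x, y, rfl⟩ hne
    dsimp only at h1 h2 h3
    have := functional_lt hn ha han hb' (x := y) (y := x) (by exact_mod_cast h2)
      (by rw [mul_comm]; exact_mod_cast h3)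
      (by rintro ⟨rfl, rfl⟩; simp at hne)
    simp only [one_mul]
    linarith

/-- A lattice point of `H_n` with a coordinate exceeding `n` is a midpoint of two others. -/
theorem coords_le {n : ℕ} (hn : 0 < n) {x y : ℤ}
    (h : ((x : ℝ), (y : ℝ)) ∈ Set.extremePoints ℝ (convexHull ℝ (Hset n ∩ intLattice))) :
    0 ≤ x ∧ x ≤ n ∧ 0 ≤ y ∧ y ≤ n := by
  obtain ⟨⟨h1, h2, h3⟩, -⟩ := extremePoints_convexHull_subset h
  dsimp only at h1 h2 h3
  have hx : 0 ≤ x := by exact_mod_cast h1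
  have hy : 0 ≤ y := by exact_mod_cast h2
  have hxy : (n : ℤ) ≤ x * y := by exact_mod_cast h3
  have hnZ : (0 : ℤ) < n := by exact_mod_cast hn
  have hx0 : 0 < x := by nlinarith
  have hy0 : 0 < y := by nlinarith
  have hmem : ∀ u v : ℤ, 0 ≤ u → 0 ≤ v → (n : ℤ) ≤ u * v →
      ((u : ℝ), (v : ℝ)) ∈ convexHull ℝ (Hset n ∩ intLattice) := fun u v hu hv huv =>
    subset_convexHull ℝ _ ⟨⟨Int.cast_nonneg hu, Int.cast_nonneg hv,
      by dsimp only; exact_mod_cast huv⟩, u, v, rfl⟩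
  rw [mem_extremePoints_iff_left] at h
  refine ⟨hx, ?_, hy, ?_⟩
  · by_contra! hlt
    have := h.2 _ (hmem (x - 1) y (by omega) hy (by nlinarith)) _
      (hmem (x + 1) y (by omega) hy (by nlinarith))
      ⟨1 / 2, 1 / 2, by norm_num, by norm_num, by norm_num, by
        ext <;> simp <;> ring⟩
    simp at this
  · by_contra! hlt
    have := h.2 _ (hmem x (y - 1) hx (by omega) (by nlinarith)) _
      (hmem x (y + 1) hx (by omega) (by nlinarith))
      ⟨1 / 2, 1 / 2, by norm_num, by norm_num, by norm_num, by
        ext <;> simp <;> ring⟩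
    simp at this

theorem finite_vertices {n : ℕ} (hn : 0 < n) :
    (Set.extremePoints ℝ (convexHull ℝ (Hset n ∩ intLattice))).Finite := by
  refine (((Set.finite_Icc (0 : ℤ) n).prod (Set.finite_Icc (0 : ℤ) n)).image
    (fun p : ℤ × ℤ => ((p.1 : ℝ), (p.2 : ℝ)))).subset ?_
  intro q hq
  obtain ⟨-, x, y, rfl⟩ := extremePoints_convexHull_subset hq
  obtain ⟨h1, h2, h3, h4⟩ := coords_le hn hq
  exact ⟨(x, y), ⟨⟨h1, h2⟩, ⟨h3, h4⟩⟩, rfl⟩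

theorem two_mul_le_ncard {n k : ℕ} (hn : 1 < n) (hk : k ^ 3 ≤ n) :
    2 * k ≤ (Set.extremePoints ℝ (convexHull ℝ (Hset n ∩ intLattice))).ncard := by
  have hceil : ∀ a : ℕ, ∃ b : ℕ, 0 < a → n ≤ a * b ∧ a * b < n + a := by
    intro a
    refine ⟨(n + a - 1) / a, fun ha => ?_⟩
    have h1 := Nat.div_add_mod (n + a - 1) a
    have h2 := Nat.mod_lt (n + a - 1) ha
    constructor <;> omega
  choose c hc using hceil
  let A : Finset (ℝ × ℝ) := (Finset.Icc 1 k).image fun a : ℕ => ((a : ℝ), (c a : ℝ))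
  let B : Finset (ℝ × ℝ) := (Finset.Icc 1 k).image fun a : ℕ => ((c a : ℝ), (a : ℝ))
  have hA : A.card = k := by
    rw [Finset.card_image_of_injective, Nat.card_Icc]
    · omega
    · intro a a' h
      exact_mod_cast (Prod.mk.inj h).1
  have hB : B.card = k := by
    rw [Finset.card_image_of_injective, Nat.card_Icc]
    · omega
    · intro a a' h
      exact_mod_cast (Prod.mk.inj h).2
  have hdisj : Disjoint A B := by
    rw [Finset.disjoint_left]
    intro q hqA hqB
    obtain ⟨a, ha, rfl⟩ := Finset.mem_image.1 hqA
    obtain ⟨a', ha', h⟩ := Finset.mem_image.1 hqB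
    rw [Finset.mem_Icc] at ha ha'
    have h2 : a' = c a := by exact_mod_cast (Prod.mk.inj h).2
    have h3 := (hc a ha.1).1
    rw [← h2] at h3
    have h4 : a * a' ≤ k * k := Nat.mul_le_mul ha.2 ha'.2
    have h5 : k ≤ 1 := by
      by_contra! hk1
      have : k * k * 2 ≤ k ^ 3 := by
        rw [pow_succ, pow_two]; gcongr; omega
      nlinarith
    have : k * k ≤ 1 * 1 := Nat.mul_le_mul h5 h5
    omega
  have hsub : (↑(A ∪ B) : Set (ℝ × ℝ)) ⊆
      Set.extremePoints ℝ (convexHull ℝ (Hset n ∩ intLattice)) := by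
    intro q hq
    have hcube : ∀ a ≤ k, a ^ 3 ≤ n := fun a ha => (Nat.pow_le_pow_left ha 3).trans hk
    rcases Finset.mem_union.1 (Finset.mem_coe.1 hq) with hq | hq
    all_goals
      obtain ⟨a, ha, rfl⟩ := Finset.mem_image.1 hq
      rw [Finset.mem_Icc] at ha
      obtain ⟨h1, h2⟩ := hc a ha.1
    · exact lattice_vertex (by omega) ha.1 (hcube a ha.2) h1 h2
    · exact lattice_vertex_swap (by omega) ha.1 (hcube a ha.2) h1 h2
  have := Set.ncard_le_ncard hsub (finite_vertices (by omega))
  rw [Set.ncard_coe_finset, Finset.card_union_of_disjoint hdisj, hA, hB] at this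
  omega

/-- For every positive integer `n`, the convex hull of `H_n ∩ ℤ²` has at least
`2 n^(1/3) - 2` vertices (extreme points). -/
theorem statement0 (n : ℕ) (hn : 0 < n) :
    2 * (n : ℝ) ^ ((1 : ℝ) / 3) - 2 ≤
      ((Set.extremePoints ℝ (convexHull ℝ (Hset n ∩ intLattice))).ncard : ℝ) := by
  rcases Nat.lt_or_ge 1 n with h1 | h1
  · have hpos : 0 ≤ (n : ℝ) ^ ((1 : ℝ) / 3) := by positivity
    have hk : ⌊(n : ℝ) ^ ((1 : ℝ) / 3)⌋₊ ^ 3 ≤ n := by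
      have h2 : ((⌊(n : ℝ) ^ ((1 : ℝ) / 3)⌋₊ : ℝ)) ^ 3 ≤ ((n : ℝ) ^ ((1 : ℝ) / 3)) ^ 3 := by
        gcongr
        exact Nat.floor_le hpos
      rw [← Real.rpow_natCast ((n : ℝ) ^ ((1 : ℝ) / 3)) 3, ← Real.rpow_mul (by positivity)] at h2
      norm_num at h2
      norm_num
      exact_mod_cast h2
    have h2 : ((2 * ⌊(n : ℝ) ^ ((1 : ℝ) / 3)⌋₊ : ℕ) : ℝ) ≤ _ :=
      Nat.cast_le.2 (two_mul_le_ncard h1 hk)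
    have h3 := Nat.lt_floor_add_one ((n : ℝ) ^ ((1 : ℝ) / 3))
    push_cast at h2
    linarith
  · -- For `n = 1` the bound is `0`.
    have : n = 1 := by omega
    subst this
    simp

end
end

section
/- For every integer n ≥ 2, the convex hull of H_n ∩ ℤ² has at most C·n^{1/3}·(log₂ n + 2) vertices, where C = 2^{7/3}·π^{2/3}. -/
noncomputable section

/-!
Every vertex `(x, y)` of the hull is a lattice point with `1 ≤ x ≤ n` and `x (y - 1) < n`
(otherwise its two horizontal or two vertical lattice neighbours lie in `H_n` and average to it),
so `x` determines `y`. Split the vertices dyadically by `2 ^ j ≤ x < 2 ^ (j + 1)`, which gives at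
most `log₂ n + 1` blocks.

Within a block, order the vertices by `x`. The steps `(a, -b)` between consecutive vertices have
positive integers `a, b`, and by strict convexity the pairs `(a, b)` are distinct. The `a`'s sum
to at most `A = 2 ^ j`, the `b`'s to at most `n / A`. With `c = n ^ (1/3)`, at most `c` steps have
`a > A / c`, at most `c` have `b > c² / A`, and the others inject into a box of area
`(A / c) (c² / A) = c` (`card_steps_le`). Hence a block has at most `3 c + 1 ≤ 4 c` vertices
(`card_block_le`), and `4 ≤ 2 ^ (7/3) π ^ (2/3)`.
-/

/-- Markov's inequality for a finite sum. -/
lemma card_gt_le {k : ℕ} (a : ℕ → ℕ) (A T c : ℝ) (hT : 0 < T) (hA : A = T * c)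
    (h : ((∑ i ∈ Finset.range k, a i : ℕ) : ℝ) ≤ A) :
    (((Finset.range k).filter (fun i => T < (a i : ℝ))).card : ℝ) ≤ c := by
  set F := (Finset.range k).filter (fun i => T < (a i : ℝ)) with hF
  have h1 : (F.card : ℝ) * T ≤ ∑ i ∈ F, (a i : ℝ) := by
    rw [← nsmul_eq_mul]
    apply Finset.card_nsmul_le_sum
    intro i hi
    exact (Finset.mem_filter.1 hi).2.le
  have h2 : ∑ i ∈ F, (a i : ℝ) ≤ ∑ i ∈ Finset.range k, (a i : ℝ) :=
    Finset.sum_le_sum_of_subset_of_nonneg (Finset.filter_subset _ _) (fun _ _ _ => by positivity)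
  push_cast at h
  have h3 : T * (F.card : ℝ) ≤ T * c := by linarith
  exact le_of_mul_le_mul_left h3 hT

/-- Distinct pairs of positive integers whose coordinate sums have product at most `c ^ 3`
number at most `3 c`. -/
lemma card_steps_le {k : ℕ} (a b : ℕ → ℕ) (A c : ℝ) (hc : 0 < c) (hA : 0 < A)
    (ha : ∀ i < k, 1 ≤ a i) (hb : ∀ i < k, 1 ≤ b i)
    (hinj : ∀ i j, i < j → j < k → ¬ (a i = a j ∧ b i = b j))
    (hsa : ((∑ i ∈ Finset.range k, a i : ℕ) : ℝ) ≤ A)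
    (hsb : ((∑ i ∈ Finset.range k, b i : ℕ) : ℝ) ≤ c ^ 3 / A) :
    (k : ℝ) ≤ 3 * c := by
  have hT : 0 < A / c := by positivity
  have hS : 0 < c ^ 2 / A := by positivity
  have h1 := card_gt_le a A (A / c) c hT (by field_simp) hsa
  have h2 := card_gt_le b (c ^ 3 / A) (c ^ 2 / A) c hS (by field_simp) hsb
  set F1 := (Finset.range k).filter (fun i => A / c < (a i : ℝ)) with hF1
  set F2 := (Finset.range k).filter (fun i => c ^ 2 / A < (b i : ℝ)) with hF2
  set F3 := (Finset.range k).filter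
    (fun i => (a i : ℝ) ≤ A / c ∧ (b i : ℝ) ≤ c ^ 2 / A) with hF3
  have hcover : Finset.range k ⊆ F1 ∪ F2 ∪ F3 := by
    intro i hi
    simp only [hF1, hF2, hF3, Finset.mem_union, Finset.mem_filter, hi, true_and]
    by_cases p : A / c < (a i : ℝ)
    · exact Or.inl (Or.inl p)
    · by_cases q : c ^ 2 / A < (b i : ℝ)
      · exact Or.inl (Or.inr q)
      · exact Or.inr ⟨not_lt.1 p, not_lt.1 q⟩
  have h3 : (F3.card : ℝ) ≤ c := by
    have hle : F3.card ≤
        (Finset.Icc 1 ⌊A / c⌋₊ ×ˢ Finset.Icc 1 ⌊c ^ 2 / A⌋₊).card := by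
      apply Finset.card_le_card_of_injOn (fun i => (a i, b i))
      · intro i hi
        obtain ⟨hi, hi1, hi2⟩ := Finset.mem_filter.1 hi
        have hi := Finset.mem_range.1 hi
        simp only [Finset.coe_product, Set.mem_prod, Finset.coe_Icc, Set.mem_Icc]
        exact ⟨⟨ha i hi, Nat.le_floor hi1⟩, ⟨hb i hi, Nat.le_floor hi2⟩⟩
      · intro i hi j hj hij
        have hi := Finset.mem_range.1 (Finset.mem_filter.1 hi).1
        have hj := Finset.mem_range.1 (Finset.mem_filter.1 hj).1
        simp only [Prod.mk.injEq] at hij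
        rcases lt_trichotomy i j with h | h | h
        · exact absurd hij (hinj i j h hj)
        · exact h
        · exact absurd ⟨hij.1.symm, hij.2.symm⟩ (hinj j i h hi)
    simp only [Finset.card_product, Nat.card_Icc, Nat.add_sub_cancel] at hle
    calc (F3.card : ℝ) ≤ (⌊A / c⌋₊ : ℝ) * ⌊c ^ 2 / A⌋₊ := by exact_mod_cast hle
      _ ≤ (A / c) * (c ^ 2 / A) :=
        mul_le_mul (Nat.floor_le hT.le) (Nat.floor_le hS.le) (by positivity) hT.le
      _ = c := by field_simp
  have h4 : k ≤ F1.card + F2.card + F3.card := by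
    calc k = (Finset.range k).card := by simp
      _ ≤ _ := Finset.card_le_card hcover
      _ ≤ _ := (Finset.card_union_le _ _).trans (by gcongr; exact Finset.card_union_le _ _)
  have h5 : (k : ℝ) ≤ F1.card + F2.card + F3.card := by exact_mod_cast h4
  linarith

lemma exists_enum (S : Finset ℕ) : ∃ x : ℕ → ℕ, (∀ i < S.card, x i ∈ S) ∧
    ∀ i j, i < j → j < S.card → x i < x j := by
  have hf : {m | m ∈ S}.Finite := S.finite_toSet
  have hc : hf.toFinset.card = S.card := by
    congr 1
    ext m
    rw [Set.Finite.mem_toFinset]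
    rfl
  refine ⟨Nat.nth (· ∈ S), fun i hi => ?_, fun i j hij hj => ?_⟩
  · exact Nat.nth_mem_of_lt_card (p := (· ∈ S)) hf (hi.trans_eq hc.symm)
  · exact Nat.nth_lt_nth_of_lt_card (p := (· ∈ S)) hf hij (hj.trans_eq hc.symm)

/-- `S` is the set of abscissae of the vertices in one dyadic block and `f` gives their
ordinates. -/
lemma card_block_le (n : ℕ) (hn : 2 ≤ n) (f : ℕ → ℕ) (S : Finset ℕ) (j : ℕ)
    (hS : ∀ x ∈ S, 2 ^ j ≤ x ∧ x < 2 ^ (j + 1))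
    (hpos : ∀ x ∈ S, 1 ≤ f x) (hup : ∀ x ∈ S, x * f x ≤ n + x)
    (hanti : ∀ x ∈ S, ∀ x' ∈ S, x < x' → f x' < f x)
    (hconv : ∀ x ∈ S, ∀ x' ∈ S, ∀ x'' ∈ S, x < x' → x' < x'' →
      ((f x' : ℝ) - f x) * ((x'' : ℝ) - x) < ((f x'' : ℝ) - f x) * ((x' : ℝ) - x)) :
    (S.card : ℝ) ≤ 4 * (n : ℝ) ^ ((1 : ℝ) / 3) := by
  set c := (n : ℝ) ^ ((1 : ℝ) / 3) with hc
  have hn1 : (1 : ℝ) ≤ n := by exact_mod_cast (by omega : 1 ≤ n)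
  have hc1 : 1 ≤ c := Real.one_le_rpow hn1 (by norm_num)
  have hc3 : c ^ 3 = n := by
    rw [hc, ← Real.rpow_natCast, ← Real.rpow_mul (by positivity)]; norm_num
  obtain ⟨x, hxS, hx⟩ := exists_enum S
  rcases Nat.eq_zero_or_pos S.card with h0 | h0
  · rw [h0]; push_cast; linarith
  obtain ⟨k, hk⟩ : ∃ k, S.card = k + 1 := ⟨S.card - 1, by omega⟩
  rw [hk] at hxS hx ⊢
  have hstep : ∀ i < k, x i < x (i + 1) := fun i hi => hx i (i + 1) (by omega) (by omega)
  have hfstep : ∀ i < k, f (x (i + 1)) < f (x i) := fun i hi =>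
    hanti _ (hxS i (by omega)) _ (hxS (i + 1) (by omega)) (hstep i hi)
  have hsum : ∀ m ≤ k, ∑ i ∈ Finset.range m, (x (i + 1) - x i) + x 0 = x m := by
    intro m
    induction m with
    | zero => simp
    | succ m ih =>
      intro hm
      have := ih (by omega)
      have := hstep m (by omega)
      rw [Finset.sum_range_succ]
      omega
  have hsumf : ∀ m ≤ k, ∑ i ∈ Finset.range m, (f (x i) - f (x (i + 1))) + f (x m) = f (x 0) := by
    intro m
    induction m with
    | zero => simp
    | succ m ih =>
      intro hm
      have := ih (by omega)
      have := hfstep m (by omega)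
      rw [Finset.sum_range_succ]
      omega
  have key : (k : ℝ) ≤ 3 * c := by
    apply card_steps_le (fun i => x (i + 1) - x i) (fun i => f (x i) - f (x (i + 1)))
      ((2 : ℝ) ^ j) c (by linarith) (by positivity)
    · intro i hi; have := hstep i hi; omega
    · intro i hi; have := hfstep i hi; omega
    · rintro i l hil hl ⟨e1, e2⟩
      have s1 := hstep i (by omega)
      have s2 := hstep l (by omega)
      have t1 := hfstep i (by omega)
      have t2 := hfstep l (by omega)
      have e1' : x (i + 1) + x l = x (l + 1) + x i := by omega
      have e2' : f (x (i + 1)) + f (x l) = f (x (l + 1)) + f (x i) := by omega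
      have e1r : (x (i + 1) : ℝ) + x l = x (l + 1) + x i := by exact_mod_cast e1'
      have e2r : (f (x (i + 1)) : ℝ) + f (x l) = f (x (l + 1)) + f (x i) := by exact_mod_cast e2'
      -- Equal steps make `P i, P (i+1), P (l+1), P l` a parallelogram, one of whose vertices
      -- `P (i+1)`, `P l` is not strictly below the diagonal from `P i` to `P (l+1)`.
      have c1 := hconv _ (hxS i (by omega)) _ (hxS (i + 1) (by omega)) _ (hxS (l + 1) (by omega))
        s1 (hx _ _ (by omega) (by omega))
      have c2 := hconv _ (hxS i (by omega)) _ (hxS l (by omega)) _ (hxS (l + 1) (by omega))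
        (hx _ _ hil (by omega)) s2
      have u : (x l : ℝ) = x (l + 1) + x i - x (i + 1) := by linarith
      have v : (f (x l) : ℝ) = f (x (l + 1)) + f (x i) - f (x (i + 1)) := by linarith
      rw [u, v] at c2
      nlinarith
    · have h := hsum k le_rfl
      have h1 := (hS _ (hxS 0 (by omega))).1
      have h2 := (hS _ (hxS k (by omega))).2
      have h3 : ∑ i ∈ Finset.range k, (x (i + 1) - x i) ≤ 2 ^ j := by
        rw [pow_succ] at h2; omega
      exact_mod_cast h3
    · have h := hsumf k le_rfl
      have h1 := (hS _ (hxS 0 (by omega))).1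
      have h2 := hpos _ (hxS k (by omega))
      have h4 := hup _ (hxS 0 (by omega))
      rw [hc3, le_div_iff₀ (by positivity)]
      set s := ∑ i ∈ Finset.range k, (f (x i) - f (x (i + 1))) with hs
      have h3 : s * 2 ^ j ≤ n := by
        have h5 : s + 1 ≤ f (x 0) := by omega
        nlinarith [Nat.mul_le_mul_left (x 0) h5, Nat.mul_le_mul_left s h1]
      exact_mod_cast h3
  push_cast
  linarith

/-- The lattice points of `H_n`. -/
abbrev latticeH (n : ℕ) : Set (ℝ × ℝ) := Hset n ∩ intLattice

/-- The vertices of `conv (H_n ∩ ℤ²)`. -/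
abbrev hullVertices (n : ℕ) : Set (ℝ × ℝ) :=
  Set.extremePoints ℝ (convexHull ℝ (latticeH n))

lemma mem_latticeH {n x y : ℕ} (h : n ≤ x * y) : ((x : ℝ), (y : ℝ)) ∈ latticeH n :=
  have h' : (n : ℝ) ≤ (x : ℝ) * y := by exact_mod_cast h
  ⟨⟨by positivity, by positivity, h'⟩, x, y, by simp⟩

lemma exists_nat_of_mem {n : ℕ} {q : ℝ × ℝ} (h : q ∈ latticeH n) :
    ∃ x y : ℕ, q = ((x : ℝ), (y : ℝ)) ∧ n ≤ x * y := by
  obtain ⟨⟨h1, h2, h3⟩, a, b, rfl⟩ := h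
  simp only at h1 h2 h3
  lift a to ℕ using (by exact_mod_cast h1)
  lift b to ℕ using (by exact_mod_cast h2)
  refine ⟨a, b, by simp, by exact_mod_cast h3⟩

lemma hull_up (n : ℕ) {p : ℝ × ℝ} (hp : p ∈ convexHull ℝ (latticeH n)) {t : ℝ} (ht : 0 ≤ t) :
    (p.1, p.2 + t) ∈ convexHull ℝ (latticeH n) := by
  have hK := convex_convexHull ℝ (latticeH n)
  revert t p
  -- Integer shifts preserve the lattice points; real shifts follow by convexity.
  have hint : ∀ m : ℕ, ∀ p ∈ convexHull ℝ (latticeH n),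
      p + ((0 : ℝ), (m : ℝ)) ∈ convexHull ℝ (latticeH n) := by
    intro m
    have hsub : convexHull ℝ (latticeH n) ⊆
        (fun z => z + ((0 : ℝ), (m : ℝ))) ⁻¹' convexHull ℝ (latticeH n) := by
      apply convexHull_min _ (hK.translate_preimage_left _)
      intro q hq
      obtain ⟨x, y, rfl, h⟩ := exists_nat_of_mem hq
      apply subset_convexHull ℝ (latticeH n)
      have := mem_latticeH (n := n) (x := x) (y := y + m) (by nlinarith)
      simpa using this
    exact fun p hp => hsub hp
  intro p hp t ht
  obtain ⟨m, hm⟩ := exists_nat_gt t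
  have hm0 : (0 : ℝ) < m := lt_of_le_of_lt ht hm
  have h := hK hp (hint m p hp) (a := 1 - t / m) (b := t / m)
    (by rw [sub_nonneg, div_le_one hm0]; exact hm.le) (by positivity) (by ring)
  convert h using 1
  ext
  · simp; ring
  · simp; field_simp; ring

lemma not_extreme_of_mid {n : ℕ} {p q r : ℝ × ℝ} (hp : p ∈ hullVertices n)
    (hq : q ∈ convexHull ℝ (latticeH n)) (hr : r ∈ convexHull ℝ (latticeH n)) {a b : ℝ}
    (ha : 0 < a) (hb : 0 < b) (hab : a + b = 1) (h : a • q + b • r = p) : q = p :=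
  hp.2 hq hr ⟨a, b, ha, hb, hab, h⟩

lemma vertex_props {n : ℕ} (hn : 2 ≤ n) {x y : ℕ} (h : ((x : ℝ), (y : ℝ)) ∈ hullVertices n) :
    n ≤ x * y ∧ 1 ≤ x ∧ 1 ≤ y ∧ x * y < n + x ∧ x * y < n + y := by
  obtain ⟨x', y', he, hxy⟩ := exists_nat_of_mem (extremePoints_convexHull_subset h)
  simp only [Prod.mk.injEq, Nat.cast_inj] at he
  obtain ⟨rfl, rfl⟩ := he
  have hx : 1 ≤ x := by rcases Nat.eq_zero_or_pos x with rfl | h' <;> omega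
  have hy : 1 ≤ y := by rcases Nat.eq_zero_or_pos y with rfl | h' <;> omega
  refine ⟨hxy, hx, hy, ?_, ?_⟩
  · by_contra! hc
    obtain ⟨z, rfl⟩ : ∃ z, y = z + 1 := ⟨y - 1, by omega⟩
    have h1 := subset_convexHull ℝ _ (mem_latticeH (n := n) (x := x) (y := z) (by nlinarith))
    have h2 := subset_convexHull ℝ _ (mem_latticeH (n := n) (x := x) (y := z + 2) (by nlinarith))
    have := not_extreme_of_mid h h1 h2 (a := 1 / 2) (b := 1 / 2) (by norm_num) (by norm_num)
      (by norm_num) (by ext <;> simp <;> ring)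
    simp at this
  · by_contra! hc
    obtain ⟨z, rfl⟩ : ∃ z, x = z + 1 := ⟨x - 1, by omega⟩
    have h1 := subset_convexHull ℝ _ (mem_latticeH (n := n) (x := z) (y := y) (by nlinarith))
    have h2 := subset_convexHull ℝ _ (mem_latticeH (n := n) (x := z + 2) (y := y) (by nlinarith))
    have := not_extreme_of_mid h h1 h2 (a := 1 / 2) (b := 1 / 2) (by norm_num) (by norm_num)
      (by norm_num) (by ext <;> simp <;> ring)
    simp at this

/-- A vertex lies strictly below the chord joining a vertex to its left and one to its right. -/
lemma vertex_conv {n : ℕ} {p q r : ℝ × ℝ} (hp : p ∈ hullVertices n) (hq : q ∈ hullVertices n)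
    (hr : r ∈ hullVertices n) (h1 : p.1 < q.1) (h2 : q.1 < r.1) :
    (q.2 - p.2) * (r.1 - p.1) < (r.2 - p.2) * (q.1 - p.1) := by
  by_contra! hc
  have hd : 0 < r.1 - p.1 := by linarith
  set b := (q.1 - p.1) / (r.1 - p.1) with hb
  -- `t` is the height of `q` above the chord; raising the chord by `t` makes it pass through `q`.
  set t := q.2 - p.2 - (r.2 - p.2) * b with ht
  have hb0 : 0 < b := div_pos (by linarith) hd
  have hb1 : b < 1 := by rw [hb, div_lt_one hd]; linarith
  have hbd : b * (r.1 - p.1) = q.1 - p.1 := by rw [hb]; field_simp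
  have ht0 : 0 ≤ t := by
    rw [← hbd] at hc
    have : 0 ≤ t * (r.1 - p.1) := by rw [ht]; nlinarith
    exact nonneg_of_mul_nonneg_left this hd
  have := not_extreme_of_mid hq (hull_up n hp.1 ht0) (hull_up n hr.1 ht0) (a := 1 - b) (b := b)
    (by linarith) hb0 (by ring) (by
      ext
      · simp; linarith
      · simp; rw [ht]; ring)
  rw [← this] at h1
  simp at h1

/-- For every integer `n ≥ 2`, the convex hull of `H_n ∩ ℤ²` has at most
`C n^(1/3) (log₂ n + 2)` vertices, where `C = 2^(7/3) π^(2/3)`. -/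
theorem statement1 (n : ℕ) (hn : 2 ≤ n) :
    (Set.extremePoints ℝ (convexHull ℝ (Hset n ∩ intLattice))).Finite ∧
    ((Set.extremePoints ℝ (convexHull ℝ (Hset n ∩ intLattice))).ncard : ℝ) ≤
      2 ^ ((7 : ℝ) / 3) * Real.pi ^ ((2 : ℝ) / 3) * (n : ℝ) ^ ((1 : ℝ) / 3) *
        (Real.logb 2 n + 2) := by
  classical
  change (hullVertices n).Finite ∧ ((hullVertices n).ncard : ℝ) ≤ _
  set X : Finset ℕ := (Finset.Icc 1 n).filter
    (fun x => ∃ y : ℕ, ((x : ℝ), (y : ℝ)) ∈ hullVertices n) with hX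
  have hex : ∀ x : ℕ, ∃ y : ℕ, x ∈ X → ((x : ℝ), (y : ℝ)) ∈ hullVertices n := by
    intro x
    by_cases hx : x ∈ X
    · obtain ⟨y, hy⟩ := (Finset.mem_filter.1 hx).2
      exact ⟨y, fun _ => hy⟩
    · exact ⟨0, fun h => absurd h hx⟩
  choose f hf using hex
  have hsub : hullVertices n ⊆ ↑(X.image (fun x : ℕ => ((x : ℝ), (f x : ℝ)))) := by
    intro q hq
    obtain ⟨x, y, rfl, hxy⟩ := exists_nat_of_mem (extremePoints_convexHull_subset hq)
    obtain ⟨p1, p2, p3, p4, p5⟩ := vertex_props hn hq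
    have hxn : x ≤ n := by
      obtain ⟨z, rfl⟩ : ∃ z, x = z + 1 := ⟨x - 1, by omega⟩
      nlinarith
    have hxX : x ∈ X := Finset.mem_filter.2 ⟨Finset.mem_Icc.2 ⟨p2, hxn⟩, y, hq⟩
    obtain ⟨q1, q2, q3, q4, q5⟩ := vertex_props hn (hf x hxX)
    have hy : f x = y := by
      rcases lt_trichotomy (f x) y with h | h | h
      · nlinarith [Nat.mul_le_mul_left x h]
      · exact h
      · nlinarith [Nat.mul_le_mul_left x h]
    simp only [Finset.coe_image, Set.mem_image, Finset.mem_coe]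
    exact ⟨x, hxX, by rw [hy]⟩
  refine ⟨(Finset.finite_toSet _).subset hsub, ?_⟩
  have hcard : (hullVertices n).ncard ≤ X.card := by
    refine (Set.ncard_le_ncard hsub (Finset.finite_toSet _)).trans ?_
    rw [Set.ncard_coe_finset]
    exact Finset.card_image_le
  set c := (n : ℝ) ^ ((1 : ℝ) / 3) with hc
  have hc0 : 0 ≤ c := by positivity
  have hblock : ∀ j ∈ Finset.range (Nat.log 2 n + 1),
      ((X.filter (fun x => Nat.log 2 x = j)).card : ℝ) ≤ 4 * c := by
    intro j _
    have hmem : ∀ x ∈ X.filter (fun x => Nat.log 2 x = j), x ∈ X :=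
      fun x hx => (Finset.mem_filter.1 hx).1
    apply card_block_le n hn f _ j
    · intro x hx
      obtain ⟨hxX, rfl⟩ := Finset.mem_filter.1 hx
      have := (Finset.mem_Icc.1 (Finset.mem_filter.1 hxX).1).1
      exact ⟨Nat.pow_log_le_self 2 (by omega), Nat.lt_pow_succ_log_self (by norm_num) x⟩
    · intro x hx
      exact (vertex_props hn (hf x (hmem x hx))).2.2.1
    · intro x hx
      exact (vertex_props hn (hf x (hmem x hx))).2.2.2.1.le
    · intro x hx x' hx' hlt
      obtain ⟨p1, p2, p3, p4, p5⟩ := vertex_props hn (hf x (hmem x hx))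
      obtain ⟨q1, q2, q3, q4, q5⟩ := vertex_props hn (hf x' (hmem x' hx'))
      by_contra! hle
      obtain ⟨z, rfl⟩ : ∃ z, x' = z + 1 := ⟨x' - 1, by omega⟩
      have := Nat.mul_le_mul (by omega : x ≤ z) hle
      nlinarith
    · intro x hx x' hx' x'' hx'' h1 h2
      exact vertex_conv (hf x (hmem x hx)) (hf x' (hmem x' hx')) (hf x'' (hmem x'' hx''))
        (by simpa using h1) (by simpa using h2)
  have hXsum : (X.card : ℝ) ≤ (Nat.log 2 n + 1) * (4 * c) := by
    have h1 : X.card = ∑ j ∈ Finset.range (Nat.log 2 n + 1),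
        (X.filter (fun x => Nat.log 2 x = j)).card := by
      apply Finset.card_eq_sum_card_fiberwise
      intro x hx
      have := (Finset.mem_Icc.1 (Finset.mem_filter.1 (Finset.mem_coe.1 hx)).1).2
      simp only [Finset.coe_range, Set.mem_Iio]
      exact Nat.lt_succ_of_le (Nat.log_mono_right this)
    rw [h1]
    push_cast
    refine (Finset.sum_le_card_nsmul _ _ _ hblock).trans ?_
    simp
  have hlog : (Nat.log 2 n : ℝ) ≤ Real.logb 2 n := by
    simpa using Real.natLog_le_logb n 2
  have hlog0 : (0 : ℝ) ≤ Nat.log 2 n := by positivity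
  have hC : (4 : ℝ) ≤ 2 ^ ((7 : ℝ) / 3) * Real.pi ^ ((2 : ℝ) / 3) := by
    have h1 : (4 : ℝ) ≤ 2 ^ ((7 : ℝ) / 3) := by
      calc (4 : ℝ) = 2 ^ (2 : ℝ) := by norm_num
        _ ≤ _ := Real.rpow_le_rpow_of_exponent_le (by norm_num) (by norm_num)
    have h2 : (1 : ℝ) ≤ Real.pi ^ ((2 : ℝ) / 3) :=
      Real.one_le_rpow (by linarith [Real.pi_gt_three]) (by norm_num)
    nlinarith
  calc ((hullVertices n).ncard : ℝ) ≤ X.card := by exact_mod_cast hcard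
    _ ≤ (Nat.log 2 n + 1) * (4 * c) := hXsum
    _ ≤ (Real.logb 2 n + 2) * (4 * c) := by gcongr; linarith
    _ = 4 * c * (Real.logb 2 n + 2) := by ring
    _ ≤ _ := by gcongr; linarith

end
end

section
/- Let a, b, c ∈ ℤ with Δ := √(b² − 4ac) a positive integer, let x₀, y₀ ∈ ℝ and n ∈ ℝ with n ≠ 0, and let h be the hyperbola {(x,y) ∈ ℝ² : a(x−x₀)² + b(x−x₀)(y−y₀) + c(y−y₀)² = n}. Let H be the closure of one of the two convex connected components of ℝ² \ h. Then the number of vertices (extreme points) of conv(H ∩ ℤ²) is at least 2·(|n|/Δ)^{1/3} − 2. -/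
/-!
Over `ℤ` the quadratic form splits as a product of two linear forms of determinant `±Δ`
(`exists_factorization`). In the coordinates `X`, `Y` given by these forms, recentred at `(x₀, y₀)`
and with signs adjusted, the region is `X * Y ≥ N`, `X > 0`, with `N = |n|` (`closure_component`;
the component between the branches is excluded by `lt_of_convex_component`).

The lattice points lie in columns `X = const` with spacing `d = gcd(p, q)`, and within a column
the values of `Y` have spacing `δ = Δ / d` (`exists_step`). Put `t = (N / Δ) ^ (1 / 3)`. For
`X ≤ d * t` the second difference of `N / X` with step `d` is at least `2 * δ`, while the lowest
lattice point of each column in the region is less than `δ` above the curve. Hence the lowest point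
of such a column strictly minimises a linear functional over the lattice points of the region and
is a vertex (`support_ineq`, `exists_vertex_in_column`). There are at least `⌊t⌋` such columns.
Exchanging the roles of `X` and `Y` gives `⌊t⌋` vertices close to the other asymptote; the two
families are disjoint when `t > 1`, and the claim is trivial when `t ≤ 1`. So there are at least
`2 * ⌊t⌋ ≥ 2 * t - 2` vertices (`vertices_lower_bound`). The set of vertices is finite
(`finite_vertices`) because both coordinates are bounded on it (`vertex_bound`).
-/

noncomputable section

/-- The hyperbola `a(x-x₀)² + b(x-x₀)(y-y₀) + c(y-y₀)² = n`. -/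
def hypSet (a b c : ℤ) (x₀ y₀ n : ℝ) : Set (ℝ × ℝ) :=
  {q | (a : ℝ) * (q.1 - x₀) ^ 2 + (b : ℝ) * (q.1 - x₀) * (q.2 - y₀)
      + (c : ℝ) * (q.2 - y₀) ^ 2 = n}

open Set

/-! ### Asymptote coordinates and extreme points -/

/-- The affine function `p x + q y - α` on the plane, with integral linear part; its zero line
is one of the asymptotes. -/
def lin (p q : ℤ) (α : ℝ) (z : ℝ × ℝ) : ℝ := p * z.1 + q * z.2 - α

/-- The closed convex region bounded by one branch of the hyperbola `L₁ * L₂ = N` (for `N > 0`),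
where `L₁ = lin p q α` and `L₂ = lin r s β`; it is the branch in the quadrant where both
are positive. -/
def branch (p q r s : ℤ) (α β N : ℝ) : Set (ℝ × ℝ) :=
  {z | 0 < lin p q α z ∧ N ≤ lin p q α z * lin r s β z}

/-- A point of `S` at which a linear functional attains a strict minimum over `S` is an extreme
point of the convex hull of `S`. -/
lemma mem_extremePoints_of_lt {S : Set (ℝ × ℝ)} {v : ℝ × ℝ} (A B : ℝ) (hv : v ∈ S)
    (h : ∀ z ∈ S, z ≠ v → A * v.1 + B * v.2 < A * z.1 + B * z.2) :
    v ∈ Set.extremePoints ℝ (convexHull ℝ S) := by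
  have hT : convexHull ℝ S ⊆ {z | z = v ∨ A * v.1 + B * v.2 < A * z.1 + B * z.2} := by
    apply convexHull_min
    · intro z hz
      by_cases hzv : z = v
      · exact Or.inl hzv
      · exact Or.inr (h z hz hzv)
    · intro z hz w hw a b ha hb hab
      simp only [mem_ofPred_eq, Prod.fst_add, Prod.snd_add, Prod.smul_fst, Prod.smul_snd,
        smul_eq_mul] at hz hw ⊢
      rcases ha.eq_or_lt with rfl | ha
      · obtain rfl : b = 1 := by linarith
        simpa using hw
      rcases hb.eq_or_lt with rfl | hb
      · obtain rfl : a = 1 := by linarith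
        simpa using hz
      rcases hz with rfl | hz <;> rcases hw with rfl | hw
      · left; rw [← add_smul, hab, one_smul]
      · right
        obtain rfl : a = 1 - b := by linarith
        nlinarith
      · right
        obtain rfl : a = 1 - b := by linarith
        nlinarith
      · right
        obtain rfl : a = 1 - b := by linarith
        nlinarith
  refine ⟨subset_convexHull ℝ S hv, ?_⟩
  rintro x hx y hy ⟨a, b, ha, hb, hab, hxy⟩
  have h1 := hT hx
  have h2 := hT hy
  have e1 : a * x.1 + b * y.1 = v.1 := by rw [← hxy]; simp
  have e2 : a * x.2 + b * y.2 = v.2 := by rw [← hxy]; simp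
  have hb' : b = 1 - a := by linarith
  subst hb'
  have key : a * (A * x.1 + B * x.2) + (1 - a) * (A * y.1 + B * y.2) = A * v.1 + B * v.2 := by
    rw [← e1, ← e2]; ring
  rcases h1 with h1 | h1
  · exact h1
  · exfalso
    rcases h2 with h2 | h2
    · rw [h2] at key
      nlinarith
    · nlinarith

/-! ### Vertices in the columns close to an asymptote -/

/-- The lattice points on a line `p x + q y = const` are spaced by a primitive vector `(e₁, e₂)`,
along which `r x + s y` grows by `δ = Δ / gcd(p, q)`. -/
lemma exists_step {p q r s Δ : ℤ} (hΔ : 0 < Δ) (hdet : |p * s - q * r| = Δ) :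
    ∃ e₁ e₂ δ : ℤ, 0 < δ ∧ δ * (Int.gcd p q : ℤ) = Δ ∧ p * e₁ + q * e₂ = 0 ∧
      r * e₁ + s * e₂ = δ ∧
      ∀ g₁ g₂ : ℤ, p * g₁ + q * g₂ = 0 → ∃ l : ℤ, g₁ = l * e₁ ∧ g₂ = l * e₂ := by
  have hbez := Int.gcd_eq_gcd_ab p q
  set u := Int.gcdA p q
  set w := Int.gcdB p q
  obtain ⟨p', hp⟩ := Int.gcd_dvd_left p q
  obtain ⟨q', hq⟩ := Int.gcd_dvd_right p q
  set d : ℤ := (Int.gcd p q : ℤ) with hd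
  have hdet' : d * (p' * s - q' * r) = p * s - q * r := by
    linear_combination (-s) * hp + r * hq
  have hd0 : 0 < d := by
    rcases (Int.natCast_nonneg (Int.gcd p q)).eq_or_lt with h | h
    · exfalso
      rw [← hdet', hd, ← h] at hdet
      simp at hdet
      omega
    · exact h
  have hbez' : p' * u + q' * w = 1 := by
    have : d * (p' * u + q' * w) = d * 1 := by
      linear_combination (-u) * hp - w * hq - hbez
    exact mul_left_cancel₀ hd0.ne' this
  have hpg : ∀ g₁ g₂ : ℤ, p * g₁ + q * g₂ = 0 → p' * g₁ + q' * g₂ = 0 := by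
    intro g₁ g₂ h
    have : d * (p' * g₁ + q' * g₂) = d * 0 := by
      linear_combination (-g₁) * hp - g₂ * hq + h
    exact mul_left_cancel₀ hd0.ne' this
  rw [← hdet', abs_mul, abs_of_pos hd0] at hdet
  have hne : 0 < |p' * s - q' * r| := by
    by_contra hcon
    nlinarith
  rcases abs_cases (p' * s - q' * r) with ⟨habs, -⟩ | ⟨habs, -⟩
  · refine ⟨-q', p', |p' * s - q' * r|, hne, by rw [← hdet]; ring, ?_, by rw [habs]; ring, ?_⟩
    · linear_combination (-q') * hp + p' * hq
    · intro g₁ g₂ h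
      have := hpg g₁ g₂ h
      refine ⟨u * g₂ - w * g₁, ?_, ?_⟩
      · linear_combination (-g₁) * hbez' + u * this
      · linear_combination (-g₂) * hbez' + w * this
  · refine ⟨q', -p', |p' * s - q' * r|, hne, by rw [← hdet]; ring, ?_, by rw [habs]; ring, ?_⟩
    · linear_combination (q') * hp - p' * hq
    · intro g₁ g₂ h
      have := hpg g₁ g₂ h
      refine ⟨-(u * g₂ - w * g₁), ?_, ?_⟩
      · linear_combination (-g₁) * hbez' + u * this
      · linear_combination (-g₂) * hbez' + w * this

/-- The estimate behind the vertices. If `(X, Y)` lies less than `δ` above the curve `Y = N / X`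
and `δ * X ^ 3 ≤ N * d ^ 2`, so that the second difference of `N / X` with step `d` is at least
`2 * δ`, then the line of slope `-(N / (X * (X + d)) + δ / d)` through `(X, Y)` runs strictly below
all points above the curve at horizontal distance at least `d`. -/
lemma support_ineq {X Y d δ N X' Y' : ℝ} (hX : 0 < X) (hd : 0 < d) (hδ : 0 < δ) (hN : 0 < N)
    (hcub : δ * X ^ 3 ≤ N * d ^ 2) (hY : Y < N / X + δ) (hX' : 0 < X') (hY' : N ≤ X' * Y')
    (hsep : X + d ≤ X' ∨ X' ≤ X - d) :
    Y + (N / (X * (X + d)) + δ / d) * X < Y' + (N / (X * (X + d)) + δ / d) * X' := by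
  have hY'' : N / X' ≤ Y' := by
    rw [div_le_iff₀ hX']; linarith
  suffices h : N / X + δ + (N / (X * (X + d)) + δ / d) * X
      ≤ N / X' + (N / (X * (X + d)) + δ / d) * X' by linarith
  rcases hsep with h | h
  · have h1 : N / X - N / X' ≤ N / (X * (X + d)) * (X' - X) := by
      have e : N / X - N / X' = N / (X * X') * (X' - X) := by field_simp
      rw [e]
      apply mul_le_mul_of_nonneg_right _ (by linarith)
      gcongr
    have h2 : δ ≤ δ / d * (X' - X) := by
      rw [div_mul_eq_mul_div, le_div_iff₀ hd]
      gcongr; linarith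
    linarith
  · have hXd : 0 < X - d := by linarith
    have h1 : N / (X * (X - d)) * (X - X') ≤ N / X' - N / X := by
      have e : N / X' - N / X = N / (X * X') * (X - X') := by field_simp
      rw [e]
      apply mul_le_mul_of_nonneg_right _ (by linarith)
      gcongr
    have h2 : δ ≤ δ / d * (X - X') := by
      rw [div_mul_eq_mul_div, le_div_iff₀ hd]
      gcongr; linarith
    -- the second difference of `N / X` with step `d` dominates `2 * δ`
    have h3 : 2 * (δ / d) + N / (X * (X + d)) ≤ N / (X * (X - d)) := by
      have e : N / (X * (X - d)) - N / (X * (X + d)) = 2 * (N * d / (X * (X - d) * (X + d))) := by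
        field_simp; ring
      have : δ / d ≤ N * d / (X * (X - d) * (X + d)) := by
        rw [div_le_div_iff₀ hd (by positivity)]
        nlinarith [mul_pos (mul_pos hδ hX) (mul_pos hd hd)]
      linarith
    have h4 := mul_le_mul_of_nonneg_right h3 (by linarith : 0 ≤ X - X')
    linarith

/-- A column of lattice points `lin p q α = X` with `0 < X ≤ gcd(p, q) * (N / Δ) ^ (1 / 3)` contains
a vertex, namely its lowest point in the region. -/
lemma exists_vertex_in_column {p q r s Δ : ℤ} (hΔ : 0 < Δ) (hdet : |p * s - q * r| = Δ)
    {α β N t : ℝ} (hN : 0 < N) (ht : (Δ : ℝ) * t ^ 3 = N) (k : ℤ)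
    (hk0 : 0 < (Int.gcd p q : ℝ) * k - α)
    (hk1 : (Int.gcd p q : ℝ) * k - α ≤ (Int.gcd p q : ℝ) * t) :
    ∃ v ∈ Set.extremePoints ℝ (convexHull ℝ (branch p q r s α β N ∩ intLattice)),
      lin p q α v = (Int.gcd p q : ℝ) * k - α := by
  obtain ⟨e₁, e₂, δ, hδ, hδd, he0, heδ, hker⟩ := exists_step hΔ hdet
  have hbez := Int.gcd_eq_gcd_ab p q
  set u := Int.gcdA p q
  set w := Int.gcdB p q
  obtain ⟨p', hp⟩ := Int.gcd_dvd_left p q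
  obtain ⟨q', hq⟩ := Int.gcd_dvd_right p q
  set d : ℕ := Int.gcd p q with hd
  have hd0 : (0 : ℝ) < d := by
    have : 0 < d := by
      rcases Nat.eq_zero_or_pos d with h | h
      · rw [h] at hδd; simp at hδd; omega
      · exact h
    exact_mod_cast this
  have hδ' : (0 : ℝ) < δ := by exact_mod_cast hδ
  have hδd' : (δ : ℝ) * d = Δ := by exact_mod_cast hδd
  have he0' : (p : ℝ) * e₁ + q * e₂ = 0 := by exact_mod_cast he0
  have heδ' : (r : ℝ) * e₁ + s * e₂ = δ := by exact_mod_cast heδ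
  have hbez' : (d : ℝ) = p * u + q * w := by exact_mod_cast hbez
  set X : ℝ := (d : ℝ) * k - α with hX
  have hcub : (δ : ℝ) * X ^ 3 ≤ N * (d : ℝ) ^ 2 := by
    have : X ^ 3 ≤ (d * t) ^ 3 := by gcongr
    calc (δ : ℝ) * X ^ 3 ≤ δ * (d * t) ^ 3 := by gcongr
      _ = N * (d : ℝ) ^ 2 := by rw [← ht, ← hδd']; ring
  set Y₀ : ℝ := r * (k * u : ℤ) + s * (k * w : ℤ) - β with hY₀
  -- `j` selects the lowest lattice point of the column `lin p q α = X` lying on or above the branch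
  set j : ℤ := ⌈(N / X - Y₀) / δ⌉ with hj
  have hj1 : N / X ≤ Y₀ + j * δ := by
    have := Int.le_ceil ((N / X - Y₀) / δ)
    rw [div_le_iff₀ hδ'] at this
    linarith
  have hj2 : Y₀ + j * δ < N / X + δ := by
    have := Int.ceil_lt_add_one ((N / X - Y₀) / δ)
    rw [← hj, ← sub_lt_iff_lt_add, lt_div_iff₀ hδ'] at this
    linarith
  set v : ℝ × ℝ := (((k * u + j * e₁ : ℤ) : ℝ), ((k * w + j * e₂ : ℤ) : ℝ)) with hv
  have hv1 : lin p q α v = X := by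
    simp only [lin, hv, hX]
    push_cast
    linear_combination (j : ℝ) * he0' - k * hbez'
  have hv2 : lin r s β v = Y₀ + j * δ := by
    simp only [lin, hv, hY₀]
    push_cast
    linear_combination (j : ℝ) * heδ'
  refine ⟨v, ?_, hv1⟩
  set μ : ℝ := N / (X * (X + d)) + δ / d with hμ
  apply mem_extremePoints_of_lt (r + μ * p) (s + μ * q)
  · refine ⟨⟨by rw [hv1]; exact hk0, ?_⟩, _, _, rfl⟩
    rw [hv1, hv2]
    rw [div_le_iff₀ hk0] at hj1
    linarith
  rintro z ⟨⟨hz1, hz2⟩, z₁, z₂, hz⟩ hzv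
  have hφ : ∀ y : ℝ × ℝ, (r + μ * p) * y.1 + (s + μ * q) * y.2
      = lin r s β y + μ * lin p q α y + (β + μ * α) := by
    intro y; simp only [lin]; ring
  rw [hφ, hφ, hv1, hv2]
  gcongr ?_ + _
  have hzX : lin p q α z = d * ((p' * z₁ + q' * z₂ : ℤ) : ℝ) - α := by
    have h1 : (p : ℝ) = d * p' := by exact_mod_cast hp
    have h2 : (q : ℝ) = d * q' := by exact_mod_cast hq
    simp only [lin, hz]
    push_cast
    rw [h1, h2]; ring
  rcases lt_trichotomy (p' * z₁ + q' * z₂) k with hlt | heq | hgt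
  · apply support_ineq hk0 hd0 hδ' hN hcub hj2 hz1 hz2
    right
    have : ((p' * z₁ + q' * z₂ : ℤ) : ℝ) ≤ k - 1 := by exact_mod_cast Int.le_sub_one_of_lt hlt
    have := mul_le_mul_of_nonneg_left this hd0.le
    rw [hzX, hX]
    linarith
  · rw [heq, ← hX] at hzX
    have hker' : p * (z₁ - (k * u + j * e₁)) + q * (z₂ - (k * w + j * e₂)) = 0 := by
      have : (d : ℤ) * (p' * z₁ + q' * z₂) = d * k := by rw [heq]
      linear_combination z₁ * hp + z₂ * hq + this + k * hbez - j * he0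
    obtain ⟨l, hl1, hl2⟩ := hker _ _ hker'
    have hl1' : (z₁ : ℝ) = ((k * u + j * e₁ : ℤ) : ℝ) + l * e₁ := by
      rw [← sub_eq_iff_eq_add']; exact_mod_cast hl1
    have hl2' : (z₂ : ℝ) = ((k * w + j * e₂ : ℤ) : ℝ) + l * e₂ := by
      rw [← sub_eq_iff_eq_add']; exact_mod_cast hl2
    have hzY : lin r s β z = Y₀ + j * δ + l * δ := by
      rw [← hv2]
      simp only [lin, hz, hv]
      rw [hl1', hl2']
      linear_combination (l : ℝ) * heδ'
    have hlow : N / X ≤ lin r s β z := by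
      rw [div_le_iff₀ hk0, ← hzX]; linarith
    have hl : 0 ≤ l := by
      by_contra hneg
      have : (l : ℝ) ≤ -1 := by exact_mod_cast (by omega : l ≤ -1)
      nlinarith
    have hl0 : l ≠ 0 := by
      rintro rfl
      apply hzv
      rw [hz, hv, hl1', hl2']
      simp
    have : (1 : ℝ) ≤ l := by exact_mod_cast (by omega : 1 ≤ l)
    rw [hzX, hzY]
    nlinarith
  · apply support_ineq hk0 hd0 hδ' hN hcub hj2 hz1 hz2
    left
    have : (k : ℝ) + 1 ≤ ((p' * z₁ + q' * z₂ : ℤ) : ℝ) := by exact_mod_cast hgt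
    have := mul_le_mul_of_nonneg_left this hd0.le
    rw [hzX, hX]
    linarith

/-- There are at least `⌊t⌋` columns satisfying the bounds of `exists_vertex_in_column`. -/
lemma exists_column_vertices {p q r s Δ : ℤ} (hΔ : 0 < Δ) (hdet : |p * s - q * r| = Δ)
    {α β N t : ℝ} (hN : 0 < N) (ht0 : 0 ≤ t) (ht : (Δ : ℝ) * t ^ 3 = N) :
    ∃ F : Finset (ℝ × ℝ),
      (F : Set (ℝ × ℝ)) ⊆
        Set.extremePoints ℝ (convexHull ℝ (branch p q r s α β N ∩ intLattice)) ∧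
      F.card = ⌊t⌋₊ ∧ ∀ z ∈ F, lin p q α z ≤ (Int.gcd p q : ℝ) * t := by
  have hd0 : (0 : ℝ) < (Int.gcd p q : ℝ) := by
    have : 0 < Int.gcd p q := by
      rcases Nat.eq_zero_or_pos (Int.gcd p q) with h | h
      · rw [Int.gcd_eq_zero_iff] at h
        rw [h.1, h.2] at hdet; simp at hdet; omega
      · exact h
    exact_mod_cast this
  set d : ℝ := (Int.gcd p q : ℝ) with hd
  have hk0 : ∀ i : ℕ, 0 < d * ((⌊α / d⌋ + 1 + i : ℤ) : ℝ) - α := by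
    intro i
    have := Int.lt_floor_add_one (α / d)
    rw [div_lt_iff₀ hd0] at this
    push_cast
    have hi : 0 ≤ d * (i : ℝ) := by positivity
    linarith
  have hk1 : ∀ i < ⌊t⌋₊, d * ((⌊α / d⌋ + 1 + i : ℤ) : ℝ) - α ≤ d * t := by
    intro i hi
    have h1 := Int.floor_le (α / d)
    rw [le_div_iff₀ hd0] at h1
    have h2 : (i : ℝ) + 1 ≤ t := by
      have := Nat.floor_le ht0
      have h3 : (i : ℝ) + 1 ≤ ⌊t⌋₊ := by exact_mod_cast hi
      linarith
    push_cast
    nlinarith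
  have hex : ∀ i : ℕ, ∃ v : ℝ × ℝ, i < ⌊t⌋₊ →
      v ∈ Set.extremePoints ℝ (convexHull ℝ (branch p q r s α β N ∩ intLattice)) ∧
      lin p q α v = d * ((⌊α / d⌋ + 1 + i : ℤ) : ℝ) - α := by
    intro i
    by_cases hi : i < ⌊t⌋₊
    · obtain ⟨v, h1, h2⟩ := exists_vertex_in_column (β := β) hΔ hdet hN ht _ (hk0 i) (hk1 i hi)
      exact ⟨v, fun _ => ⟨h1, h2⟩⟩
    · exact ⟨0, fun h => absurd h hi⟩
  choose f hf using hex
  refine ⟨(Finset.range ⌊t⌋₊).image f, ?_, ?_, ?_⟩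
  · intro z hz
    simp only [Finset.coe_image, Set.mem_image, Finset.mem_coe, Finset.mem_range] at hz
    obtain ⟨i, hi, rfl⟩ := hz
    exact (hf i hi).1
  · rw [Finset.card_image_of_injOn, Finset.card_range]
    intro i hi i' hi' h
    have hi := (hf i (by simpa using hi)).2
    have hi' := (hf i' (by simpa using hi')).2
    rw [h, hi'] at hi
    have := mul_left_cancel₀ hd0.ne' (sub_left_injective hi)
    have := Int.cast_injective this
    omega
  · intro z hz
    simp only [Finset.mem_image, Finset.mem_range] at hz
    obtain ⟨i, hi, rfl⟩ := hz
    rw [(hf i hi).2]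
    exact hk1 i hi

/-! ### Finiteness and the count -/

/-- The coordinate `lin r s β` is bounded on the vertices: a lattice point of the region has
`lin p q α` bounded below by a positive constant, so if its other coordinate is large, then
both its neighbours in the same column belong to the region and it is not extreme. -/
lemma vertex_bound {p q r s Δ : ℤ} (hΔ : 0 < Δ) (hdet : |p * s - q * r| = Δ)
    {α β N : ℝ} (hN : 0 < N) :
    ∃ B : ℝ, ∀ v ∈ Set.extremePoints ℝ (convexHull ℝ (branch p q r s α β N ∩ intLattice)),
      lin r s β v ≤ B := by
  obtain ⟨e₁, e₂, δ, hδ, -, he0, heδ, -⟩ := exists_step hΔ hdet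
  have hδ' : (0 : ℝ) < δ := by exact_mod_cast hδ
  have he0' : (p : ℝ) * e₁ + q * e₂ = 0 := by exact_mod_cast he0
  have heδ' : (r : ℝ) * e₁ + s * e₂ = δ := by exact_mod_cast heδ
  set m : ℝ := (⌊α⌋ : ℝ) + 1 - α with hm
  have hm0 : 0 < m := by have := Int.lt_floor_add_one α; linarith
  refine ⟨N / m + δ, fun v hv => ?_⟩
  obtain ⟨⟨hv1, hv2⟩, v₁, v₂, hvz⟩ := extremePoints_convexHull_subset hv
  have hmv : m ≤ lin p q α v := by
    have h1 : lin p q α v = ((p * v₁ + q * v₂ : ℤ) : ℝ) - α := by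
      rw [hvz]; simp [lin]
    rw [h1] at hv1 ⊢
    have : ⌊α⌋ < p * v₁ + q * v₂ := Int.floor_lt.2 (by linarith)
    have : ((⌊α⌋ : ℤ) : ℝ) + 1 ≤ ((p * v₁ + q * v₂ : ℤ) : ℝ) := by exact_mod_cast this
    rw [hm]; linarith
  by_contra! hcon
  have hl1 : ∀ ε : ℝ, lin p q α (v.1 + ε * e₁, v.2 + ε * e₂) = lin p q α v := by
    intro ε; simp only [lin]; linear_combination ε * he0'
  have hl2 : ∀ ε : ℝ, lin r s β (v.1 + ε * e₁, v.2 + ε * e₂) = lin r s β v + ε * δ := by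
    intro ε; simp only [lin]; linear_combination ε * heδ'
  have hNm : N ≤ lin p q α v * (lin r s β v - δ) := by
    have h1 : N / m < lin r s β v - δ := by linarith
    have h2 : 0 < N / m := by positivity
    calc N = m * (N / m) := by field_simp
      _ ≤ _ := by gcongr
  have hmem : ∀ ε : ℤ, (-1 : ℝ) ≤ ε → ((v.1 + ε * e₁, v.2 + ε * e₂) : ℝ × ℝ) ∈
      convexHull ℝ (branch p q r s α β N ∩ intLattice) := by
    intro ε hε
    apply subset_convexHull
    refine ⟨⟨by rw [hl1]; exact hv1, ?_⟩, v₁ + ε * e₁, v₂ + ε * e₂, by rw [hvz]; push_cast; rfl⟩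
    rw [hl1, hl2]
    refine hNm.trans ?_
    gcongr
    nlinarith
  have hm1 := hmem (-1) (by simp)
  have hp1 := hmem 1 (by norm_num)
  have := hv.2 hm1 hp1 ⟨1 / 2, 1 / 2, by norm_num, by norm_num, by norm_num, by
    ext <;> simp <;> ring⟩
  have h3 := hl2 ((-1 : ℤ) : ℝ)
  rw [this] at h3
  push_cast at h3
  linarith

lemma branch_swap (p q r s : ℤ) (α β N : ℝ) (hN : 0 < N) :
    branch p q r s α β N = branch r s p q β α N := by
  ext z
  simp only [branch, mem_ofPred_eq]
  rw [mul_comm (lin r s β z)]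
  constructor
  · rintro ⟨h1, h2⟩
    exact ⟨by by_contra! h; nlinarith, h2⟩
  · rintro ⟨h1, h2⟩
    exact ⟨by by_contra! h; nlinarith, h2⟩

/-- Finiteness matters because `Set.ncard` of an infinite set is `0`. -/
lemma finite_vertices_s2 {p q r s Δ : ℤ} (hΔ : 0 < Δ) (hdet : |p * s - q * r| = Δ)
    {α β N : ℝ} (hN : 0 < N) :
    (Set.extremePoints ℝ (convexHull ℝ (branch p q r s α β N ∩ intLattice))).Finite := by
  obtain ⟨B, hB⟩ := vertex_bound (α := α) (β := β) hΔ hdet hN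
  have hdet' : |r * q - s * p| = Δ := by rw [← hdet, ← abs_neg]; congr 1; ring
  obtain ⟨C, hC⟩ := vertex_bound (α := β) (β := α) hΔ hdet' hN
  rw [branch_swap r s p q β α N hN] at hC
  have hD : p * s - q * r ≠ 0 := by
    intro h; rw [h] at hdet; simp at hdet; omega
  have hDR : (p : ℝ) * s - q * r ≠ 0 := by exact_mod_cast hD
  have hfin : ((Set.Icc (⌊α⌋) ⌈C + α⌉) ×ˢ (Set.Icc (⌊β⌋) ⌈B + β⌉)).Finite :=
    (Set.finite_Icc _ _).prod (Set.finite_Icc _ _)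
  refine (hfin.image fun k : ℤ × ℤ => (((s * k.1 - q * k.2 : ℝ) / (p * s - q * r)),
    ((p * k.2 - r * k.1 : ℝ) / (p * s - q * r)))).subset ?_
  intro v hv
  have hv' := extremePoints_convexHull_subset hv
  have hv'' := hv'
  rw [branch_swap p q r s α β N hN] at hv''
  have hb1 := hv'.1.1
  have hb2 := hv''.1.1
  have hB := hB v hv
  have hC := hC v hv
  obtain ⟨-, v₁, v₂, rfl⟩ := hv'
  simp only [lin] at hb1 hb2 hB hC
  refine ⟨(p * v₁ + q * v₂, r * v₁ + s * v₂), ⟨⟨?_, ?_⟩, ⟨?_, ?_⟩⟩, ?_⟩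
  · rw [← Int.cast_le (R := ℝ)]; push_cast; linarith [Int.floor_le α]
  · rw [← Int.cast_le (R := ℝ)]; push_cast; linarith [Int.le_ceil (C + α)]
  · rw [← Int.cast_le (R := ℝ)]; push_cast; linarith [Int.floor_le β]
  · rw [← Int.cast_le (R := ℝ)]; push_cast; linarith [Int.le_ceil (B + β)]
  · ext
    · simp only; push_cast; rw [div_eq_iff hDR]; ring
    · simp only; push_cast; rw [div_eq_iff hDR]; ring

/-- The bound for a branch in asymptote coordinates: `⌊t⌋` vertices close to each asymptote, where
`t = (N / Δ) ^ (1 / 3)`. The two families are disjoint for `t > 1`, since a common point would give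
`N ≤ gcd(p, q) * gcd(r, s) * t ^ 2 ≤ Δ * t ^ 2 < Δ * t ^ 3 = N`. -/
lemma vertices_lower_bound {p q r s Δ : ℤ} (hΔ : 0 < Δ) (hdet : |p * s - q * r| = Δ)
    {α β N : ℝ} (hN : 0 < N) :
    2 * (N / (Δ : ℝ)) ^ ((1 : ℝ) / 3) - 2 ≤
      ((Set.extremePoints ℝ (convexHull ℝ (branch p q r s α β N ∩ intLattice))).ncard : ℝ) := by
  have hΔ' : (0 : ℝ) < Δ := by exact_mod_cast hΔ
  set t : ℝ := (N / (Δ : ℝ)) ^ ((1 : ℝ) / 3) with ht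
  have ht0 : 0 ≤ t := by positivity
  have ht3 : (Δ : ℝ) * t ^ 3 = N := by
    rw [ht, ← Real.rpow_natCast, ← Real.rpow_mul (by positivity)]
    norm_num
    field_simp
  rcases le_or_gt t 1 with h1 | h1
  · have : (0 : ℝ) ≤ ((Set.extremePoints ℝ
      (convexHull ℝ (branch p q r s α β N ∩ intLattice))).ncard : ℝ) := by positivity
    linarith
  have hdet' : |r * q - s * p| = Δ := by rw [← hdet, ← abs_neg]; congr 1; ring
  obtain ⟨F, hF, hFc, hFb⟩ := exists_column_vertices (α := α) (β := β) hΔ hdet hN ht0 ht3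
  obtain ⟨G, hG, hGc, hGb⟩ := exists_column_vertices (α := β) (β := α) hΔ hdet' hN ht0 ht3
  rw [branch_swap r s p q β α N hN] at hG
  have hgcd : (Int.gcd p q : ℝ) * (Int.gcd r s : ℝ) ≤ Δ := by
    have h2 : (Int.gcd p q : ℤ) * (Int.gcd r s : ℤ) ∣ Δ := by
      rw [← hdet, dvd_abs]
      exact dvd_sub (mul_dvd_mul (Int.gcd_dvd_left p q) (Int.gcd_dvd_right r s))
        (mul_dvd_mul (Int.gcd_dvd_right p q) (Int.gcd_dvd_left r s))
    exact_mod_cast Int.le_of_dvd hΔ h2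
  have hdisj : Disjoint F G := by
    rw [Finset.disjoint_left]
    intro z hzF hzG
    obtain ⟨⟨h3, h4⟩, -⟩ := extremePoints_convexHull_subset (hF hzF)
    have h5 := hFb z hzF
    have h6 := hGb z hzG
    have h7 : 0 < lin r s β z := by by_contra! h; nlinarith
    have h8 : lin p q α z * lin r s β z ≤ (Int.gcd p q * t) * (Int.gcd r s * t) := by gcongr
    have h9 : (Int.gcd p q * t) * (Int.gcd r s * t) ≤ Δ * t ^ 2 := by
      calc (Int.gcd p q * t) * (Int.gcd r s * t)
          = ((Int.gcd p q : ℝ) * (Int.gcd r s : ℝ)) * t ^ 2 := by ring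
        _ ≤ _ := by gcongr
    have h10 : (Δ : ℝ) * t ^ 2 < Δ * t ^ 3 := by
      gcongr
      norm_num
    linarith
  have hcard : (F ∪ G).card ≤
      (Set.extremePoints ℝ (convexHull ℝ (branch p q r s α β N ∩ intLattice))).ncard := by
    rw [← Set.ncard_coe_finset]
    apply Set.ncard_le_ncard _ (finite_vertices_s2 hΔ hdet hN)
    rw [Finset.coe_union]
    exact Set.union_subset hF hG
  rw [Finset.card_union_of_disjoint hdisj, hFc, hGc] at hcard
  have hcard' : ((⌊t⌋₊ + ⌊t⌋₊ : ℕ) : ℝ) ≤ _ := Nat.cast_le.2 hcard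
  push_cast at hcard'
  have := Nat.lt_floor_add_one t
  linarith

/-- A binary quadratic form whose discriminant is a nonzero square splits into two integral linear
factors of determinant `±Δ`. -/
lemma exists_factorization {a b c Δ : ℤ} (h : Δ ^ 2 = b ^ 2 - 4 * a * c) (hΔ : 0 < Δ) :
    ∃ p q r s : ℤ, p * r = a ∧ p * s + q * r = b ∧ q * s = c ∧ |p * s - q * r| = Δ := by
  rcases eq_or_ne a 0 with rfl | ha
  · refine ⟨0, 1, b, c, by ring, by ring, by ring, ?_⟩
    rw [← abs_of_pos hΔ]
    rw [← sq_eq_sq_iff_abs_eq_abs]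
    linear_combination -h
  have hpar : Even (b + Δ) := by
    have h2 : Even ((b + Δ) * (b - Δ)) := ⟨2 * (a * c), by linear_combination -h⟩
    rcases Int.even_mul.1 h2 with h3 | h3
    · exact h3
    · have := h3.add (even_two_mul Δ)
      rwa [show b + Δ = b - Δ + 2 * Δ by ring]
  obtain ⟨e, he⟩ := hpar
  obtain ⟨f, hf⟩ : ∃ f, f = b - e := ⟨_, rfl⟩
  have hef : e * f = a * c := by
    have hΔe : Δ = 2 * e - b := by linarith
    rw [hΔe] at h
    rw [hf]; linarith
  have hbez := Int.gcd_eq_gcd_ab a e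
  obtain ⟨p, hp⟩ := Int.gcd_dvd_left a e
  obtain ⟨q, hq⟩ := Int.gcd_dvd_right a e
  set g : ℤ := (Int.gcd a e : ℤ)
  have hg0 : g ≠ 0 := by rintro h0; rw [h0] at hp; simp at hp; exact ha hp
  have hp0 : p ≠ 0 := by rintro rfl; simp at hp; exact ha hp
  have hqf : q * f = p * c := by
    apply mul_left_cancel₀ hg0
    linear_combination hef - f * hq + c * hp
  have hcop : IsCoprime p q := by
    refine ⟨Int.gcdA a e, Int.gcdB a e, mul_left_cancel₀ hg0 ?_⟩
    linear_combination (-Int.gcdA a e) * hp - Int.gcdB a e * hq - hbez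
  obtain ⟨s, hs⟩ : p ∣ f := hcop.dvd_of_dvd_mul_left ⟨c, hqf⟩
  refine ⟨p, q, g, s, by linarith, ?_, ?_, ?_⟩
  · linear_combination (-1) * hs - hq + hf
  · apply mul_left_cancel₀ hp0
    rw [← hqf, hs]; ring
  · have : p * s - q * g = -Δ := by
      linear_combination (-1) * hs + hq + hf + he
    rw [this, abs_neg, abs_of_pos hΔ]

/-! ### Components of the complement of the hyperbola -/

lemma continuous_lin (p q : ℤ) (α : ℝ) : Continuous (lin p q α) := by
  unfold lin; fun_prop

lemma lin_combo (p q : ℤ) (α : ℝ) (z w : ℝ × ℝ) {a b : ℝ} (hab : a + b = 1) :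
    lin p q α (a • z + b • w) = a * lin p q α z + b * lin p q α w := by
  simp only [lin, Prod.fst_add, Prod.snd_add, Prod.smul_fst, Prod.smul_snd, smul_eq_mul]
  linear_combination α * hab

lemma exists_lin_eq {p q r s : ℤ} (hD : p * s - q * r ≠ 0) (α β A B : ℝ) :
    ∃ z : ℝ × ℝ, lin p q α z = A ∧ lin r s β z = B := by
  have hDR : (p : ℝ) * s - q * r ≠ 0 := by exact_mod_cast hD
  refine ⟨((s * (A + α) - q * (B + β)) / (p * s - q * r),
    (p * (B + β) - r * (A + α)) / (p * s - q * r)), ?_, ?_⟩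
  · simp only [lin]
    rw [sub_eq_iff_eq_add, ← mul_div_assoc, ← mul_div_assoc, ← add_div, div_eq_iff hDR]
    ring
  · simp only [lin]
    rw [sub_eq_iff_eq_add, ← mul_div_assoc, ← mul_div_assoc, ← add_div, div_eq_iff hDR]
    ring

/-- The component between the two branches is not convex, so a convex component lies on the
far side of a branch. -/
lemma lt_of_convex_component {p q r s : ℤ} (hD : p * s - q * r ≠ 0) {α β N : ℝ} (hN : 0 < N)
    {x : ℝ × ℝ} (hx : lin p q α x * lin r s β x ≠ N)
    (hconv : Convex ℝ (connectedComponentIn {z | lin p q α z * lin r s β z ≠ N} x)) :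
    N < lin p q α x * lin r s β x := by
  by_contra! hle
  have hlt := lt_of_le_of_ne hle hx
  obtain ⟨o, ho1, ho2⟩ := exists_lin_eq hD α β 0 0
  set M : Set (ℝ × ℝ) := {z | lin p q α z * lin r s β z < N} with hM
  have hoM : o ∈ M := by simp only [hM, mem_ofPred_eq, ho1, ho2]; simpa using hN
  have hstar : StarConvex ℝ o M := by
    intro z hz a b ha hb hab
    simp only [hM, mem_ofPred_eq] at hz ⊢
    rw [lin_combo _ _ _ _ _ hab, lin_combo _ _ _ _ _ hab, ho1, ho2]
    have hb1 : b ^ 2 ≤ 1 := by nlinarith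
    have e : (a * 0 + b * lin p q α z) * (a * 0 + b * lin r s β z)
        = b ^ 2 * (lin p q α z * lin r s β z) := by ring
    rw [e]
    rcases le_or_gt (lin p q α z * lin r s β z) 0 with h | h <;> nlinarith [sq_nonneg b]
  have hsub : M ⊆ connectedComponentIn {z | lin p q α z * lin r s β z ≠ N} x :=
    (hstar.isPathConnected hoM).isConnected.isPreconnected.subset_connectedComponentIn hlt
      (fun z hz => ne_of_lt hz)
  -- the midpoint of these two points of the middle region lies on the hyperbola
  obtain ⟨y, hy1, hy2⟩ := exists_lin_eq hD α β (2 * √N) 0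
  obtain ⟨w, hw1, hw2⟩ := exists_lin_eq hD α β 0 (2 * √N)
  have hy : y ∈ M := by simp only [hM, mem_ofPred_eq, hy1, hy2]; simpa using hN
  have hw : w ∈ M := by simp only [hM, mem_ofPred_eq, hw1, hw2]; simpa using hN
  have hmid := connectedComponentIn_subset _ _ (hconv (hsub hy) (hsub hw)
    (by norm_num : (0 : ℝ) ≤ 1 / 2) (by norm_num : (0 : ℝ) ≤ 1 / 2) (by norm_num))
  apply hmid
  rw [lin_combo _ _ _ _ _ (by norm_num), lin_combo _ _ _ _ _ (by norm_num), hy1, hy2, hw1, hw2]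
  have := Real.mul_self_sqrt hN.le
  linear_combination this

lemma closure_component {p q r s : ℤ} (hD : p * s - q * r ≠ 0) {α β N : ℝ} (hN : 0 < N)
    {x : ℝ × ℝ} (hx0 : 0 < lin p q α x) (hx : N < lin p q α x * lin r s β x) :
    closure (connectedComponentIn {z | lin p q α z * lin r s β z ≠ N} x)
      = branch p q r s α β N := by
  have hc1 := continuous_lin p q α
  have hc2 := continuous_lin r s β
  set U : Set (ℝ × ℝ) := {z | 0 < lin p q α z ∧ N < lin p q α z * lin r s β z} with hU
  have hUopen : IsOpen U :=
    (isOpen_lt continuous_const hc1).inter (isOpen_lt continuous_const (hc1.mul hc2))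
  have hUconv : Convex ℝ U := by
    rintro z ⟨hz1, hz2⟩ w ⟨hw1, hw2⟩ a b ha hb hab
    simp only [hU, mem_ofPred_eq]
    rw [lin_combo _ _ _ _ _ hab, lin_combo _ _ _ _ _ hab]
    generalize lin p q α z = X at *
    generalize lin r s β z = Y at *
    generalize lin p q α w = X' at *
    generalize lin r s β w = Y' at *
    have hY : 0 < Y := by by_contra! h; nlinarith
    have hY' : 0 < Y' := by by_contra! h; nlinarith
    -- arithmetic-geometric mean inequality for the two mixed products
    have hmix : 2 * N ≤ X * Y' + X' * Y := by
      have h1 : N * N ≤ (X * Y) * (X' * Y') := by gcongr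
      have h2 : (2 * N) ^ 2 ≤ (X * Y' + X' * Y) ^ 2 := by
        nlinarith [sq_nonneg (X * Y' - X' * Y)]
      exact le_of_sq_le_sq h2 (by positivity)
    have hcases : 0 < a ∨ 0 < b := by
      by_contra! h; linarith [h.1, h.2]
    refine ⟨by rcases hcases with h | h <;> positivity, ?_⟩
    have e1 : (a * X + b * X') * (a * Y + b * Y')
      = a ^ 2 * (X * Y) + a * b * (X * Y' + X' * Y) + b ^ 2 * (X' * Y') := by ring
    have e2 : N = a ^ 2 * N + a * b * (2 * N) + b ^ 2 * N := by
      linear_combination (-N * (a + b + 1)) * hab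
    have h3 : a * b * (2 * N) ≤ a * b * (X * Y' + X' * Y) := by gcongr
    rw [e1]
    rcases hcases with h | h
    · have h4 : a ^ 2 * N < a ^ 2 * (X * Y) := by gcongr
      have h5 : b ^ 2 * N ≤ b ^ 2 * (X' * Y') := by gcongr
      linarith
    · have h4 : a ^ 2 * N ≤ a ^ 2 * (X * Y) := by gcongr
      have h5 : b ^ 2 * N < b ^ 2 * (X' * Y') := by gcongr
      linarith
  have hK : connectedComponentIn {z | lin p q α z * lin r s β z ≠ N} x = U := by
    apply Subset.antisymm
    · have hV : IsOpen {z | lin p q α z * lin r s β z < N ∨ lin p q α z < 0} :=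
        (isOpen_lt (hc1.mul hc2) continuous_const).union (isOpen_lt hc1 continuous_const)
      refine IsPreconnected.subset_left_of_subset_union hUopen hV ?_ ?_
        ⟨x, mem_connectedComponentIn (ne_of_gt hx), hx0, hx⟩ isPreconnected_connectedComponentIn
      · rw [Set.disjoint_left]
        rintro z ⟨h1, h2⟩ (h3 | h3) <;> linarith
      · intro z hz
        have hz : lin p q α z * lin r s β z ≠ N := connectedComponentIn_subset _ _ hz
        rcases hz.lt_or_gt with h | h
        · exact Or.inr (Or.inl h)
        · rcases lt_trichotomy (lin p q α z) 0 with h0 | h0 | h0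
          · exact Or.inr (Or.inr h0)
          · rw [h0] at h; linarith
          · exact Or.inl ⟨h0, h⟩
    · exact hUconv.isPreconnected.subset_connectedComponentIn ⟨hx0, hx⟩ fun z hz => ne_of_gt hz.2
  rw [hK]
  apply Subset.antisymm
  · have hcl : IsClosed {z | 0 ≤ lin p q α z ∧ N ≤ lin p q α z * lin r s β z} :=
      (isClosed_le continuous_const hc1).inter (isClosed_le continuous_const (hc1.mul hc2))
    have hsub : U ⊆ {z | 0 ≤ lin p q α z ∧ N ≤ lin p q α z * lin r s β z} :=
      fun z hz => ⟨hz.1.le, hz.2.le⟩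
    refine (closure_minimal hsub hcl).trans ?_
    rintro z ⟨h1, h2⟩
    refine ⟨h1.lt_of_ne fun h => ?_, h2⟩
    rw [← h] at h2; linarith
  · rintro z ⟨h1, h2⟩
    obtain ⟨w, hw1, hw2⟩ := exists_lin_eq hD 0 0 1 1
    have htend : Filter.Tendsto (fun ε : ℝ => z + ε • w) (nhdsWithin 0 (Ioi 0)) (nhds z) := by
      have : Continuous fun ε : ℝ => z + ε • w := by fun_prop
      have := this.tendsto 0
      simp only [zero_smul, add_zero] at this
      exact this.mono_left nhdsWithin_le_nhds
    refine mem_closure_of_tendsto htend ?_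
    filter_upwards [self_mem_nhdsWithin] with ε hε
    have hε : 0 < ε := hε
    have e1 : lin p q α (z + ε • w) = lin p q α z + ε := by
      simp only [lin, Prod.fst_add, Prod.snd_add, Prod.smul_fst, Prod.smul_snd,
        smul_eq_mul] at hw1 ⊢
      linear_combination ε * hw1
    have e2 : lin r s β (z + ε • w) = lin r s β z + ε := by
      simp only [lin, Prod.fst_add, Prod.snd_add, Prod.smul_fst, Prod.smul_snd,
        smul_eq_mul] at hw2 ⊢
      linear_combination ε * hw2
    have hY : 0 < lin r s β z := by by_contra! h; nlinarith
    refine ⟨by rw [e1]; positivity, ?_⟩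
    rw [e1, e2]
    nlinarith [mul_pos h1 hε, mul_pos hY hε]

/-- Both signs of `lin p q α x` are covered, the negative one by negating both linear factors. -/
lemma bound_of_component {p q r s Δ : ℤ} (hΔ : 0 < Δ) (hdet : |p * s - q * r| = Δ)
    {α β N : ℝ} (hN : 0 < N) {x : ℝ × ℝ} (hx : lin p q α x * lin r s β x ≠ N)
    (hconv : Convex ℝ (connectedComponentIn {z | lin p q α z * lin r s β z ≠ N} x)) :
    2 * (N / (Δ : ℝ)) ^ ((1 : ℝ) / 3) - 2 ≤
      ((Set.extremePoints ℝ (convexHull ℝ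
        (closure (connectedComponentIn {z | lin p q α z * lin r s β z ≠ N} x)
          ∩ intLattice))).ncard : ℝ) := by
  have hD : p * s - q * r ≠ 0 := by
    intro h; rw [h] at hdet; simp at hdet; omega
  have hgt := lt_of_convex_component hD hN hx hconv
  rcases lt_trichotomy (lin p q α x) 0 with h0 | h0 | h0
  · have hneg : ∀ (p q : ℤ) (α : ℝ) (z : ℝ × ℝ), lin p q α z = -lin (-p) (-q) (-α) z := by
      intro p q α z; simp only [lin]; push_cast; ring
    have hdet' : -p * -s - -q * -r = p * s - q * r := by ring
    simp only [hneg p q α, hneg r s β, neg_mul_neg] at h0 hgt ⊢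
    rw [closure_component (by rw [hdet']; exact hD) hN (by linarith) hgt]
    exact vertices_lower_bound hΔ (by rw [hdet']; exact hdet) hN
  · rw [h0] at hgt; linarith
  · rw [closure_component hD hN h0 hgt]
    exact vertices_lower_bound hΔ hdet hN

/-- Lower bound `2 (|n|/Δ)^(1/3) - 2` on the number of vertices of the convex hull of
the integer points in the closure `H` of a convex connected component of the complement
of a hyperbola with integer coefficients and positive integer discriminant `Δ`. -/
theorem statement2 (a b c Δ : ℤ) (hΔ : 0 < Δ)
    (hdisc : (Δ : ℝ) = Real.sqrt ((b : ℝ) ^ 2 - 4 * (a : ℝ) * (c : ℝ)))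
    (x₀ y₀ n : ℝ) (hn : n ≠ 0)
    (x : ℝ × ℝ) (hx : x ∉ hypSet a b c x₀ y₀ n)
    (K : Set (ℝ × ℝ)) (hK : K = connectedComponentIn (hypSet a b c x₀ y₀ n)ᶜ x)
    (hKconv : Convex ℝ K)
    (H : Set (ℝ × ℝ)) (hH : H = closure K) :
    2 * (|n| / (Δ : ℝ)) ^ ((1 : ℝ) / 3) - 2 ≤
      ((Set.extremePoints ℝ (convexHull ℝ (H ∩ intLattice))).ncard : ℝ) := by
  have hdiscZ : Δ ^ 2 = b ^ 2 - 4 * a * c := by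
    have hΔ' : (0 : ℝ) < Δ := by exact_mod_cast hΔ
    have h0 : (0 : ℝ) < (b : ℝ) ^ 2 - 4 * (a : ℝ) * (c : ℝ) := by
      rw [hdisc] at hΔ'; exact Real.sqrt_pos.1 hΔ'
    have h1 : (Δ : ℝ) ^ 2 = (b : ℝ) ^ 2 - 4 * (a : ℝ) * (c : ℝ) := by
      rw [hdisc, Real.sq_sqrt h0.le]
    exact_mod_cast h1
  obtain ⟨p, q, r, s, h1, h2, h3, hdet⟩ := exists_factorization hdiscZ hΔ
  have h1' : (p : ℝ) * r = a := by exact_mod_cast h1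
  have h2' : (p : ℝ) * s + q * r = b := by exact_mod_cast h2
  have h3' : (q : ℝ) * s = c := by exact_mod_cast h3
  subst hH hK
  rcases lt_or_gt_of_ne hn with hneg | hpos
  · -- for `n < 0` the first factor is negated
    have hset : (hypSet a b c x₀ y₀ n)ᶜ = {z | lin (-p) (-q) (-(p * x₀ + q * y₀)) z *
        lin r s (r * x₀ + s * y₀) z ≠ |n|} := by
      ext z
      simp only [hypSet, mem_compl_iff, mem_ofPred_eq, ne_eq, lin, abs_of_neg hneg]
      rw [← h1', ← h2', ← h3', not_iff_not]
      push_cast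
      constructor <;> intro h <;> linear_combination -h
    rw [← mem_compl_iff] at hx
    rw [hset] at hx hKconv ⊢
    refine bound_of_component hΔ ?_ (abs_pos.2 hn) hx hKconv
    rw [← hdet, ← abs_neg]; congr 1; ring
  · have hset : (hypSet a b c x₀ y₀ n)ᶜ = {z | lin p q (p * x₀ + q * y₀) z *
        lin r s (r * x₀ + s * y₀) z ≠ |n|} := by
      ext z
      simp only [hypSet, mem_compl_iff, mem_ofPred_eq, ne_eq, lin, abs_of_pos hpos]
      rw [← h1', ← h2', ← h3', not_iff_not]
      constructor <;> intro h <;> linear_combination h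
    rw [← mem_compl_iff] at hx
    rw [hset] at hx hKconv ⊢
    exact bound_of_component hΔ hdet (abs_pos.2 hn) hx hKconv

end
end

section
/- Let n ∈ ℝ_{>0}, p ∈ ℝ², and let Λ ⊇ ℤ² be a superlattice of ℤ² such that (1,0) and (0,1) are primitive vectors of Λ. Set m := (1/det Λ)·max{n, 2}. Then for every real number k ≥ 2, the number of vertices of conv(H_n ∩ (p+Λ)) is at most (2⁸·π²·(k−1)²/k)^{1/3} · m^{1/3} · (log_k m + 2). -/
/-!
Only two facts about `Λ` matter: it contains `(1, 0)` and `(0, 1)`, and the cross product of two of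
its vectors is an integer multiple of `δ = det Λ`. By the first, the point set is closed under unit
steps to the right and upwards, so the vertices of its hull form a strictly decreasing, strictly convex
chain. A vertex `(x, y)` cannot be moved left or down by a unit inside `H_n`, which gives
`x y ≤ 2 N` with `N = max n 2` (`mul_le_two_mul_max`). By the second, distinct vertices differ by at
least `δ` in each coordinate, so all but at most two vertices have both coordinates at least `δ`;
their abscissas lie in `[δ, 2 N / δ]`, an interval of ratio at most `m ^ 2`, which
`2 * logb k m + 1` slabs `[δ k ^ j, δ k ^ (j + 1))` cover.

The vertices in one slab have a bounding box of area at most `2 (k - 1) N`, and consecutive edges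
span parallelograms of area at least `δ`. The affine-length type estimate `chain_edges_le` then
bounds their number by `2 + 5 β / 3`, where `β ^ 3 = 2 (k - 1) m`. Adding up and comparing constants
(`final_estimate`, using `π ^ 2 ≥ 9`) gives the claim.

Infinitely many vertices would make `Set.ncard` zero, so finiteness need not be proved.
-/

noncomputable section

/-- The lattice generated by two vectors `v, w`. -/
def latticeOf (v w : ℝ × ℝ) : Set (ℝ × ℝ) :=
  {q | ∃ a b : ℤ, q = (a : ℝ) • v + (b : ℝ) • w}

/-- The covolume (absolute determinant) of the lattice with basis `v, w`. -/
def detOf (v w : ℝ × ℝ) : ℝ := |v.1 * w.2 - v.2 * w.1|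

/-- The translate `p + S` of a set `S ⊆ ℝ²`. -/
def translateSet (p : ℝ × ℝ) (S : Set (ℝ × ℝ)) : Set (ℝ × ℝ) := (fun q => p + q) '' S

/-- `u` is a primitive vector of the lattice `Λ`: `u ∈ Λ` and `u` is not a multiple
`k • w`, `k ≥ 2`, of any `w ∈ Λ`. -/
def IsPrimitiveVec (Λ : Set (ℝ × ℝ)) (u : ℝ × ℝ) : Prop :=
  u ∈ Λ ∧ ∀ w ∈ Λ, ∀ k : ℤ, 2 ≤ k → u ≠ (k : ℝ) • w

/-! ### A counting bound for convex lattice chains -/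

/-- AM-GM for three positive numbers whose product is at least `1`. -/
lemma three_le_add_of_one_le_mul {a b c : ℝ} (ha : 0 < a) (hb : 0 < b) (hc : 0 < c)
    (h : 1 ≤ a * b * c) : 3 ≤ a + b + c := by
  by_contra hlt
  push Not at hlt
  have h1 : 27 * (a * b * c) ≤ (a + b + c) ^ 3 := by
    nlinarith [mul_nonneg ha.le (sq_nonneg (b - c)), mul_nonneg hb.le (sq_nonneg (a - c)),
      mul_nonneg hc.le (sq_nonneg (a - b)), mul_nonneg ha.le (sq_nonneg (a - b)),
      mul_nonneg ha.le (sq_nonneg (a - c)), mul_nonneg hb.le (sq_nonneg (b - c)),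
      mul_nonneg hb.le (sq_nonneg (a - b)), mul_nonneg hc.le (sq_nonneg (b - c)),
      mul_nonneg hc.le (sq_nonneg (a - c))]
  have h2 : (a + b + c) ^ 3 < 3 ^ 3 := pow_lt_pow_left₀ hlt (by positivity) (by norm_num)
  linarith

/-- A strictly decreasing, strictly convex chain with `M` edges, whose consecutive edges span
parallelograms of area at least `δ` and whose bounding box has area at most `β ^ 3 * δ`, has few
edges.

With `X`, `Y` the side lengths of the box, give the edge `(a, -b)` the length `f = a / X + b / Y`
and the direction `φ = (b / Y) / f ∈ (0, 1)`. Consecutive edges satisfy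
`f f' (φ - φ') = (b a' - b' a) / (X Y) ≥ δ / (X Y)`; AM-GM turns this product into a sum, which
telescopes because the lengths add up to `2` and `φ` is decreasing. -/
lemma chain_edges_le (M : ℕ) (x y : ℕ → ℝ) (δ β : ℝ) (hδ : 0 < δ) (hβ : 0 < β)
    (hx : ∀ i < M, x i < x (i + 1)) (hy : ∀ i < M, y (i + 1) < y i)
    (hc : ∀ i, i + 1 < M →
      δ ≤ (y i - y (i + 1)) * (x (i + 2) - x (i + 1)) - (y (i + 1) - y (i + 2)) * (x (i + 1) - x i))
    (hB : (x M - x 0) * (y 0 - y M) ≤ β ^ 3 * δ) :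
    (M : ℝ) ≤ 1 + 5 * β / 3 := by
  rcases Nat.eq_zero_or_pos M with rfl | hM
  · simp; positivity
  obtain ⟨E, rfl⟩ : ∃ E, M = E + 1 := ⟨M - 1, by omega⟩
  have hx0 : ∀ j, j ≤ E → x 0 < x (j + 1) := by
    intro j hj
    induction j with
    | zero => exact hx 0 hM
    | succ j ih => exact (ih (by omega)).trans (hx _ (by omega))
  have hy0 : ∀ j, j ≤ E → y (j + 1) < y 0 := by
    intro j hj
    induction j with
    | zero => exact hy 0 hM
    | succ j ih => exact (hy _ (by omega)).trans (ih (by omega))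
  set X := x (E + 1) - x 0 with hX
  set Y := y 0 - y (E + 1) with hY
  have hXp : 0 < X := by have := hx0 E le_rfl; linarith
  have hYp : 0 < Y := by have := hy0 E le_rfl; linarith
  set f : ℕ → ℝ := fun i => (x (i + 1) - x i) / X + (y i - y (i + 1)) / Y with hf
  set φ : ℕ → ℝ := fun i => (y i - y (i + 1)) / Y / f i with hφ
  have hfa : ∀ i, i ≤ E → 0 < (x (i + 1) - x i) / X := fun i hi =>
    div_pos (by have := hx i (by omega); linarith) hXp
  have hfb : ∀ i, i ≤ E → 0 < (y i - y (i + 1)) / Y := fun i hi =>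
    div_pos (by have := hy i (by omega); linarith) hYp
  have hfp : ∀ i, i ≤ E → 0 < f i := fun i hi => add_pos (hfa i hi) (hfb i hi)
  have hstep : ∀ i, i < E → 3 ≤ β * f i + β * f (i + 1) + β * (φ i - φ (i + 1)) := by
    intro i hi
    have h1 := hfp i (by omega)
    have h2 := hfp (i + 1) (by omega)
    have hcr := hc i (by omega)
    have key : f i * f (i + 1) * (φ i - φ (i + 1)) =
        ((y i - y (i + 1)) * (x (i + 2) - x (i + 1))
          - (y (i + 1) - y (i + 2)) * (x (i + 1) - x i)) / (X * Y) := by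
      have : f i * f (i + 1) * (φ i - φ (i + 1)) =
          (y i - y (i + 1)) / Y * f (i + 1) - (y (i + 1) - y (i + 2)) / Y * f i := by
        simp only [hφ]
        field_simp
      rw [this]
      simp only [hf]
      field_simp
      ring
    have hbig : 1 ≤ β ^ 3 * (f i * f (i + 1) * (φ i - φ (i + 1))) := by
      rw [key, ← mul_div_assoc, le_div_iff₀ (by positivity), one_mul]
      exact hB.trans (by gcongr)
    have hφp : 0 < φ i - φ (i + 1) := by
      have h3 : 0 < f i * f (i + 1) * (φ i - φ (i + 1)) := by
        rw [key]; exact div_pos (by linarith) (by positivity)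
      exact pos_of_mul_pos_right h3 (by positivity)
    exact three_le_add_of_one_le_mul (by positivity) (by positivity) (by positivity)
      (by linarith [hbig, (by ring : β * f i * (β * f (i + 1)) * (β * (φ i - φ (i + 1))) =
        β ^ 3 * (f i * f (i + 1) * (φ i - φ (i + 1))))])
  have hsum : ∀ j, j ≤ E → 3 * (j : ℝ) ≤
      β * ((x j - x 0) / X + (y 0 - y j) / Y) + β * ((x (j + 1) - x 0) / X + (y 0 - y (j + 1)) / Y)
        + β * (φ 0 - φ j) := by
    intro j hj
    induction j with
    | zero =>
      have := hfp 0 (by omega)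
      simp only [hf, zero_add] at this
      simp
      positivity
    | succ j ih =>
      have h1 := ih (by omega)
      have h2 := hstep j (by omega)
      have e1 : (x (j + 1) - x 0) / X + (y 0 - y (j + 1)) / Y =
          (x j - x 0) / X + (y 0 - y j) / Y + f j := by simp only [hf]; ring
      have e2 : (x (j + 1 + 1) - x 0) / X + (y 0 - y (j + 1 + 1)) / Y =
          (x (j + 1) - x 0) / X + (y 0 - y (j + 1)) / Y + f (j + 1) := by simp only [hf]; ring
      rw [e2, mul_add β _ (f (j + 1))]
      nth_rewrite 1 [e1]
      push_cast
      linarith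
  have hE := hsum E le_rfl
  rw [← hX, ← hY, div_self hXp.ne', div_self hYp.ne'] at hE
  have hφ0 : φ 0 ≤ 1 := by
    have h1 := hfp 0 (by omega)
    have h2 := hfa 0 (by omega)
    simp only [hφ]
    rw [div_le_one h1]
    simp only [hf]
    linarith
  have hφE : 0 ≤ φ E := (div_pos (hfb E le_rfl) (hfp E le_rfl)).le
  have hlast : (x E - x 0) / X + (y 0 - y E) / Y ≤ 2 := by
    have h1 := hfp E le_rfl
    have e : (x E - x 0) / X + (y 0 - y E) / Y + f E = X / X + Y / Y := by
      simp only [hf, hX, hY]; ring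
    rw [div_self hXp.ne', div_self hYp.ne'] at e
    linarith
  have hφd : φ 0 - φ E ≤ 1 := by linarith
  have h1 := mul_le_mul_of_nonneg_left hlast hβ.le
  have h2 := mul_le_mul_of_nonneg_left hφd hβ.le
  push_cast
  linarith

/-- The bound of `chain_edges_le` for a finite set of points, to be ordered by abscissa. -/
lemma card_chain_le (S : Finset (ℝ × ℝ)) (δ β B : ℝ) (hδ : 0 < δ) (hβ : 0 < β)
    (hinj : ∀ P ∈ S, ∀ Q ∈ S, P.1 = Q.1 → P = Q)
    (hanti : ∀ P ∈ S, ∀ Q ∈ S, P.1 < Q.1 → Q.2 < P.2)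
    (hconv : ∀ P ∈ S, ∀ Q ∈ S, ∀ R ∈ S, P.1 < Q.1 → Q.1 < R.1 →
      δ ≤ (P.2 - Q.2) * (R.1 - Q.1) - (Q.2 - R.2) * (Q.1 - P.1))
    (hbox : ∀ P ∈ S, ∀ Q ∈ S, P.1 ≤ Q.1 → (Q.1 - P.1) * (P.2 - Q.2) ≤ B)
    (hB : B ≤ β ^ 3 * δ) :
    (S.card : ℝ) ≤ 2 + 5 * β / 3 := by
  rcases S.eq_empty_or_nonempty with rfl | hne
  · simp; positivity
  have hcard : (S.image Prod.fst).card = S.card :=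
    Finset.card_image_of_injOn fun P hP Q hQ h => hinj P hP Q hQ h
  obtain ⟨M, hM⟩ : ∃ M, S.card = M + 1 :=
    ⟨S.card - 1, by have := hne.card_pos; omega⟩
  rw [hM] at hcard
  set e := (S.image Prod.fst).orderEmbOfFin hcard with he
  have hex : ∀ i : Fin (M + 1), ∃ P ∈ S, P.1 = e i := fun i => by
    have := Finset.orderEmbOfFin_mem (S.image Prod.fst) hcard i
    simpa only [Finset.mem_image] using this
  choose P hPS hPe using hex
  -- Indices beyond `M` are irrelevant; they are sent to the last point.
  let Q : ℕ → ℝ × ℝ := fun i => P ⟨min i M, by omega⟩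
  have hQS : ∀ i, Q i ∈ S := fun i => hPS _
  have hQx : ∀ i < M, (Q i).1 < (Q (i + 1)).1 := by
    intro i hi
    simp only [Q, hPe]
    apply e.strictMono
    simp only [Fin.mk_lt_mk]
    omega
  have hQle : (Q 0).1 ≤ (Q M).1 := by
    simp only [Q, hPe]
    apply e.monotone
    simp
  have := chain_edges_le M (fun i => (Q i).1) (fun i => (Q i).2) δ β hδ hβ hQx
    (fun i hi => hanti _ (hQS _) _ (hQS _) (hQx i hi))
    (fun i hi => hconv _ (hQS _) _ (hQS _) _ (hQS _) (hQx i (by omega)) (hQx (i + 1) hi))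
    ((hbox _ (hQS _) _ (hQS _) hQle).trans hB)
  rw [hM]
  push_cast
  linarith

/-! ### Vertices of the convex hull of a set closed under unit steps -/

section Vertices

variable {S : Set (ℝ × ℝ)}

lemma extreme_mem {P : ℝ × ℝ} (hP : P ∈ (convexHull ℝ S).extremePoints ℝ) : P ∈ S :=
  extremePoints_convexHull_subset hP

lemma extreme_not_between {P Q R : ℝ × ℝ} (hP : P ∈ (convexHull ℝ S).extremePoints ℝ)
    (hQ : Q ∈ convexHull ℝ S) (hR : R ∈ convexHull ℝ S) (h : P ∈ openSegment ℝ Q R) : Q = P :=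
  hP.2 hQ hR h

lemma mem_convexHull_add_up (hup : ∀ q ∈ S, q + (0, 1) ∈ S) {P : ℝ × ℝ} (hP : P ∈ S) {t : ℝ}
    (ht : 0 ≤ t) : P + (0, t) ∈ convexHull ℝ S := by
  have hnat : ∀ j : ℕ, P + (0, (j : ℝ)) ∈ S := by
    intro j
    induction j with
    | zero => rw [Nat.cast_zero, Prod.mk_zero_zero, add_zero]; exact hP
    | succ j ih =>
      have := hup _ ih
      rw [add_assoc] at this
      simpa using this
  obtain ⟨j, hj⟩ := exists_nat_gt t
  have hjp : (0 : ℝ) < j := ht.trans_lt hj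
  refine (convex_convexHull ℝ S).segment_subset (subset_convexHull ℝ S hP)
    (subset_convexHull ℝ S (hnat j)) ⟨1 - t / j, t / j, ?_, by positivity, by ring, ?_⟩
  · have : t / j ≤ 1 := (div_le_one hjp).2 hj.le
    linarith
  · ext
    · simp; ring
    · simp; field_simp; ring

lemma extreme_eq_of_fst_eq (hup : ∀ q ∈ S, q + (0, 1) ∈ S) {P Q : ℝ × ℝ}
    (hP : P ∈ (convexHull ℝ S).extremePoints ℝ) (hQ : Q ∈ (convexHull ℝ S).extremePoints ℝ)
    (h : P.1 = Q.1) : P = Q := by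
  have aux : ∀ P Q : ℝ × ℝ, P ∈ (convexHull ℝ S).extremePoints ℝ →
      Q ∈ (convexHull ℝ S).extremePoints ℝ → P.1 = Q.1 → ¬ P.2 < Q.2 := by
    intro P Q hP hQ h hlt
    have hd : 0 < Q.2 + 1 - P.2 := by linarith
    have := extreme_not_between hQ hP.1 (subset_convexHull ℝ S (hup _ (extreme_mem hQ)))
      ⟨1 / (Q.2 + 1 - P.2), (Q.2 - P.2) / (Q.2 + 1 - P.2), by positivity,
        div_pos (by linarith) hd, by field_simp; ring, by
        ext
        · simp [h]; field_simp; ring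
        · simp; field_simp; ring⟩
    rw [this] at hlt
    exact lt_irrefl _ hlt
  exact Prod.ext h (le_antisymm (not_lt.1 (aux Q P hQ hP h.symm)) (not_lt.1 (aux P Q hP hQ h)))

lemma extreme_anti (hup : ∀ q ∈ S, q + (0, 1) ∈ S) (hright : ∀ q ∈ S, q + (1, 0) ∈ S)
    {P Q : ℝ × ℝ} (hP : P ∈ (convexHull ℝ S).extremePoints ℝ)
    (hQ : Q ∈ (convexHull ℝ S).extremePoints ℝ) (h : P.1 < Q.1) : Q.2 < P.2 := by
  by_contra hle
  push Not at hle
  have hR := mem_convexHull_add_up hup (extreme_mem hP) (sub_nonneg.2 hle)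
  have hd : 0 < Q.1 + 1 - P.1 := by linarith
  have := extreme_not_between hQ hR (subset_convexHull ℝ S (hright _ (extreme_mem hQ)))
    ⟨1 / (Q.1 + 1 - P.1), (Q.1 - P.1) / (Q.1 + 1 - P.1), by positivity,
      div_pos (by linarith) hd, by field_simp; ring, by
      ext
      · simp; field_simp; ring
      · simp; field_simp; ring⟩
  have h1 := congrArg Prod.fst this
  simp at h1
  linarith

/-- Of three vertices, the middle one lies strictly below the chord through the outer two. -/
lemma extreme_below_chord (hup : ∀ q ∈ S, q + (0, 1) ∈ S) {P Q R : ℝ × ℝ}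
    (hP : P ∈ (convexHull ℝ S).extremePoints ℝ) (hQ : Q ∈ (convexHull ℝ S).extremePoints ℝ)
    (hR : R ∈ (convexHull ℝ S).extremePoints ℝ) (h1 : P.1 < Q.1) (h2 : Q.1 < R.1) :
    0 < (P.2 - Q.2) * (R.1 - Q.1) - (Q.2 - R.2) * (Q.1 - P.1) := by
  by_contra hle
  push Not at hle
  have hd : 0 < R.1 - P.1 := by linarith
  have hs1 : 0 < (R.1 - Q.1) / (R.1 - P.1) := div_pos (by linarith) hd
  have hs2 : 0 < (Q.1 - P.1) / (R.1 - P.1) := div_pos (by linarith) hd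
  have hs3 : (R.1 - Q.1) / (R.1 - P.1) + (Q.1 - P.1) / (R.1 - P.1) = 1 := by
    field_simp; ring
  -- `T` is the point of the chord with the abscissa of `Q`.
  set T : ℝ × ℝ := ((R.1 - Q.1) / (R.1 - P.1)) • P + ((Q.1 - P.1) / (R.1 - P.1)) • R with hT
  have hTmem : T ∈ openSegment ℝ P R := ⟨_, _, hs1, hs2, hs3, rfl⟩
  have hTK : T ∈ convexHull ℝ S :=
    (convex_convexHull ℝ S).openSegment_subset hP.1 hR.1 hTmem
  have hT1 : T.1 = Q.1 := by
    simp [hT]; field_simp; ring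
  have hT2 : T.2 - Q.2 = ((P.2 - Q.2) * (R.1 - Q.1) - (Q.2 - R.2) * (Q.1 - P.1)) / (R.1 - P.1) := by
    simp [hT]; field_simp; ring
  have hT2' : T.2 ≤ Q.2 := by
    have := div_nonpos_of_nonpos_of_nonneg hle hd.le
    linarith
  have hTQ : T ≠ Q := by
    intro hTQ
    rw [hTQ] at hTmem
    have := extreme_not_between hQ hP.1 hR.1 hTmem
    rw [this] at h1
    exact lt_irrefl _ h1
  have hlt : T.2 < Q.2 := lt_of_le_of_ne hT2' fun h => hTQ (Prod.ext hT1 h)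
  clear_value T
  have hd' : 0 < Q.2 + 1 - T.2 := by linarith
  refine hTQ (extreme_not_between hQ hTK (subset_convexHull ℝ S (hup _ (extreme_mem hQ)))
    ⟨1 / (Q.2 + 1 - T.2), (Q.2 - T.2) / (Q.2 + 1 - T.2), by positivity,
      div_pos (by linarith) hd', by field_simp; ring, ?_⟩)
  ext
  · simp [hT1]; field_simp; ring
  · simp; field_simp; ring

lemma extreme_sub_notMem {P u : ℝ × ℝ} (hu : u ≠ 0)
    (hP : P ∈ (convexHull ℝ S).extremePoints ℝ) (hadd : P + u ∈ S) : P - u ∉ S := by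
  intro hsub
  have := extreme_not_between hP (subset_convexHull ℝ S hsub) (subset_convexHull ℝ S hadd)
    ⟨1 / 2, 1 / 2, by norm_num, by norm_num, by norm_num, by module⟩
  exact hu (by simpa using this)

end Vertices

/-! ### Lattice points and the hyperbola -/

/-- Cross products of lattice vectors are integer multiples of the determinant, hence at least the
covolume once they are positive. -/
lemma detOf_le_cross {v w p P Q R T : ℝ × ℝ} (hP : P ∈ translateSet p (latticeOf v w))
    (hQ : Q ∈ translateSet p (latticeOf v w)) (hR : R ∈ translateSet p (latticeOf v w))
    (hT : T ∈ translateSet p (latticeOf v w))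
    (h : 0 < (P.1 - Q.1) * (R.2 - T.2) - (P.2 - Q.2) * (R.1 - T.1)) :
    detOf v w ≤ (P.1 - Q.1) * (R.2 - T.2) - (P.2 - Q.2) * (R.1 - T.1) := by
  obtain ⟨_, ⟨a, b, rfl⟩, rfl⟩ := hP
  obtain ⟨_, ⟨a', b', rfl⟩, rfl⟩ := hQ
  obtain ⟨_, ⟨c, d, rfl⟩, rfl⟩ := hR
  obtain ⟨_, ⟨c', d', rfl⟩, rfl⟩ := hT
  have key : ((p + ((a : ℝ) • v + (b : ℝ) • w)).1 - (p + ((a' : ℝ) • v + (b' : ℝ) • w)).1) *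
      ((p + ((c : ℝ) • v + (d : ℝ) • w)).2 - (p + ((c' : ℝ) • v + (d' : ℝ) • w)).2) -
      ((p + ((a : ℝ) • v + (b : ℝ) • w)).2 - (p + ((a' : ℝ) • v + (b' : ℝ) • w)).2) *
      ((p + ((c : ℝ) • v + (d : ℝ) • w)).1 - (p + ((c' : ℝ) • v + (d' : ℝ) • w)).1) =
      (((a - a') * (d - d') - (b - b') * (c - c') : ℤ) : ℝ) * (v.1 * w.2 - v.2 * w.1) := by
    simp
    ring
  simp only at h ⊢
  rw [key] at h ⊢
  generalize ((a - a') * (d - d') - (b - b') * (c - c') : ℤ) = z at h ⊢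
  rw [← abs_of_pos h, abs_mul]
  have hz : z ≠ 0 := by
    rintro rfl
    simp at h
  have : (1 : ℝ) ≤ |(z : ℝ)| := by exact_mod_cast Int.one_le_abs hz
  unfold detOf
  nlinarith [abs_nonneg (v.1 * w.2 - v.2 * w.1)]

lemma translateSet_add {v w p P u : ℝ × ℝ} (hP : P ∈ translateSet p (latticeOf v w))
    (hu : u ∈ latticeOf v w) : P + u ∈ translateSet p (latticeOf v w) := by
  obtain ⟨_, ⟨a, b, rfl⟩, rfl⟩ := hP
  obtain ⟨c, d, rfl⟩ := hu
  refine ⟨_, ⟨a + c, b + d, rfl⟩, ?_⟩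
  push_cast
  module

lemma translateSet_sub {v w p P u : ℝ × ℝ} (hP : P ∈ translateSet p (latticeOf v w))
    (hu : u ∈ latticeOf v w) : P - u ∈ translateSet p (latticeOf v w) := by
  obtain ⟨_, ⟨a, b, rfl⟩, rfl⟩ := hP
  obtain ⟨c, d, rfl⟩ := hu
  refine ⟨_, ⟨a - c, b - d, rfl⟩, ?_⟩
  push_cast
  module

/-- A point of `H_n` that leaves `H_n` when moved left or down by a unit is close to the
hyperbola. -/
lemma mul_le_two_mul_max {n x y : ℝ} (hx : 0 < x) (hy : 0 < y)
    (h1 : 1 ≤ x → (x - 1) * y < n) (h2 : 1 ≤ y → x * (y - 1) < n) :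
    x * y ≤ 2 * max n 2 := by
  have hN1 : n ≤ max n 2 := le_max_left _ _
  have hN2 : 2 ≤ max n 2 := le_max_right _ _
  set N := max n 2
  clear_value N
  have key : ∀ x y : ℝ, 0 < x → 0 < y → (1 ≤ x → (x - 1) * y < n) →
      (1 ≤ y → x * (y - 1) < n) → x ≤ y → x * y ≤ 2 * N := by
    intro x y hx hy h1 h2 hxy
    rcases lt_or_ge y 1 with hy1 | hy1
    · nlinarith
    have h2' := h2 hy1
    rcases lt_or_ge x 1 with hx1 | hx1
    · nlinarith
    have h1x := h1 hx1
    -- `x (x - 1) ≤ x (y - 1) < N ≤ N (N - 1)`, so `x ≤ N`.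
    have : x ≤ N := by
      by_contra hlt
      push Not at hlt
      nlinarith
    nlinarith
  rcases le_total x y with h | h
  · exact key x y hx hy h1 h2 h
  · have := key y x hy hx (fun h => by linarith [h2 h, mul_comm x (y - 1)])
      (fun h => by linarith [h1 h, mul_comm y (x - 1)]) h
    linarith [mul_comm x y]

/-! ### Summing over geometric slabs -/

/-- The numerical comparison: `2 * logb k m + 1` slabs with `2 + 5 * β / 3` points each, and two
further points, where `β ^ 3 = 2 * (k - 1) * m`. -/
lemma final_estimate {k m c β : ℝ} (hk : 2 ≤ k) (hm : 2 ≤ m)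
    (hβ : β = (2 * (k - 1) * m) ^ ((1 : ℝ) / 3))
    (hc : c ≤ (2 + 5 * β / 3) * (2 * Real.logb k m + 1) + 2) :
    c ≤ (2 ^ 8 * Real.pi ^ 2 * (k - 1) ^ 2 / k) ^ ((1 : ℝ) / 3) * m ^ ((1 : ℝ) / 3) *
        (Real.logb k m + 2) := by
  have hL : 0 ≤ Real.logb k m := Real.logb_nonneg (by linarith) (by linarith)
  have hβ1 : 1 ≤ β := by
    rw [hβ]
    exact Real.one_le_rpow (by nlinarith) (by norm_num)
  have h8 : 8 * β ≤ (2 ^ 8 * Real.pi ^ 2 * (k - 1) ^ 2 / k) ^ ((1 : ℝ) / 3) *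
      m ^ ((1 : ℝ) / 3) := by
    rw [← Real.mul_rpow (by positivity) (by linarith), hβ]
    have e8 : (8 : ℝ) = (8 ^ 3 : ℝ) ^ ((1 : ℝ) / 3) := by
      rw [← Real.rpow_natCast, ← Real.rpow_mul (by norm_num)]
      norm_num
    have hkm : 0 ≤ 2 * (k - 1) * m := mul_nonneg (by linarith) (by linarith)
    nth_rewrite 1 [e8]
    rw [← Real.mul_rpow (by norm_num) hkm]
    apply Real.rpow_le_rpow (mul_nonneg (by norm_num) hkm) _ (by norm_num)
    rw [div_mul_eq_mul_div, le_div_iff₀ (by linarith)]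
    have hpi : 9 ≤ Real.pi ^ 2 := by nlinarith [Real.pi_gt_three]
    have hA : 0 ≤ (k - 1) * m := mul_nonneg (by linarith) (by linarith)
    have h1 : 4 * k ≤ Real.pi ^ 2 * (k - 1) := by nlinarith
    nlinarith [mul_le_mul_of_nonneg_left h1 hA]
  calc c ≤ (2 + 5 * β / 3) * (2 * Real.logb k m + 1) + 2 := hc
    _ ≤ 8 * β * (Real.logb k m + 2) := by nlinarith [mul_nonneg hL (sub_nonneg.2 hβ1)]
    _ ≤ _ := by gcongr

/-- Upper bound on the number of vertices of `conv(H_n ∩ (p + Λ))` for a superlattice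
`Λ ⊇ ℤ²` in which `(1,0)` and `(0,1)` are primitive, with `m = (1/det Λ) max {n, 2}`:
for every real `k ≥ 2` the number of vertices is at most
`(2⁸ π² (k-1)²/k)^(1/3) m^(1/3) (log_k m + 2)`. -/
theorem statement4 (n : ℝ) (hn : 0 < n) (p v w : ℝ × ℝ)
    (hvw : v.1 * w.2 - v.2 * w.1 ≠ 0)
    (hsup : intLattice ⊆ latticeOf v w)
    (hprim1 : IsPrimitiveVec (latticeOf v w) (1, 0))
    (hprim2 : IsPrimitiveVec (latticeOf v w) (0, 1))
    (k : ℝ) (hk : 2 ≤ k)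
    (m : ℝ) (hm : m = (1 / detOf v w) * max n 2) :
    ((Set.extremePoints ℝ
        (convexHull ℝ (Hset n ∩ translateSet p (latticeOf v w)))).ncard : ℝ) ≤
      (2 ^ 8 * Real.pi ^ 2 * (k - 1) ^ 2 / k) ^ ((1 : ℝ) / 3) * m ^ ((1 : ℝ) / 3) *
        (Real.logb k m + 2) := by
  classical
  set δ := detOf v w with hδdef
  set S := Hset n ∩ translateSet p (latticeOf v w) with hS
  set V := (convexHull ℝ S).extremePoints ℝ with hV
  set N := max n 2 with hNdef
  have hδ : 0 < δ := abs_pos.2 hvw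
  have hN2 : 2 ≤ N := le_max_right _ _
  have hu1 : ((1 : ℝ), (0 : ℝ)) ∈ latticeOf v w := hprim1.1
  have hu2 : ((0 : ℝ), (1 : ℝ)) ∈ latticeOf v w := hprim2.1
  have hδ1 : δ ≤ 1 := by
    have h0 : p ∈ translateSet p (latticeOf v w) := ⟨0, ⟨0, 0, by simp⟩, by simp⟩
    have := detOf_le_cross (translateSet_add h0 hu1) h0 (translateSet_add h0 hu2) h0 (by simp)
    simpa using this
  have hup : ∀ q ∈ S, q + (0, 1) ∈ S := by
    rintro q ⟨⟨h1, h2, h3⟩, h4⟩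
    refine ⟨⟨?_, ?_, ?_⟩, translateSet_add h4 hu2⟩
    · simpa using h1
    · simp; linarith
    · simp; nlinarith
  have hright : ∀ q ∈ S, q + (1, 0) ∈ S := by
    rintro q ⟨⟨h1, h2, h3⟩, h4⟩
    refine ⟨⟨?_, ?_, ?_⟩, translateSet_add h4 hu1⟩
    · simp; linarith
    · simpa using h2
    · simp; nlinarith
  have hmem : ∀ q ∈ V, q ∈ S := fun q hq => extreme_mem hq
  have hpos : ∀ q ∈ V, 0 < q.1 ∧ 0 < q.2 := by
    intro q hq
    obtain ⟨⟨h1, h2, h3⟩, -⟩ := hmem q hq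
    have h4 : 0 < q.1 * q.2 := hn.trans_le h3
    exact ⟨pos_of_mul_pos_left h4 h2, pos_of_mul_pos_right h4 h1⟩
  have hle : ∀ q ∈ V, q.1 * q.2 ≤ 2 * N := by
    intro q hq
    have hqS := hmem q hq
    obtain ⟨h1, h2⟩ := hpos q hq
    apply mul_le_two_mul_max h1 h2
    · intro h
      by_contra hlt
      push Not at hlt
      refine extreme_sub_notMem (by simp) hq (hright q hqS)
        ⟨⟨?_, ?_, ?_⟩, translateSet_sub hqS.2 hu1⟩
      · simpa using h
      · simpa using h2.le
      · simpa using hlt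
    · intro h
      by_contra hlt
      push Not at hlt
      refine extreme_sub_notMem (by simp) hq (hup q hqS)
        ⟨⟨?_, ?_, ?_⟩, translateSet_sub hqS.2 hu2⟩
      · simpa using h1.le
      · simpa using h
      · simpa using hlt
  have hanti : ∀ P ∈ V, ∀ Q ∈ V, P.1 < Q.1 → Q.2 < P.2 := fun P hP Q hQ h =>
    extreme_anti hup hright hP hQ h
  have hinj : ∀ P ∈ V, ∀ Q ∈ V, P.1 = Q.1 → P = Q := fun P hP Q hQ h =>
    extreme_eq_of_fst_eq hup hP hQ h
  -- Distinct vertices differ by at least `δ` in each coordinate: take cross products with the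
  -- unit vectors.
  have hgap1 : ∀ P ∈ V, ∀ Q ∈ V, P.1 < Q.1 → δ ≤ Q.1 - P.1 := by
    intro P hP Q hQ h
    have := detOf_le_cross (hmem Q hQ).2 (hmem P hP).2
      (translateSet_add (hmem P hP).2 hu2) (hmem P hP).2 (by simp; linarith)
    simpa using this
  have hgap2 : ∀ P ∈ V, ∀ Q ∈ V, P.1 < Q.1 → δ ≤ P.2 - Q.2 := by
    intro P hP Q hQ h
    have h' := hanti P hP Q hQ h
    have := detOf_le_cross (translateSet_add (hmem P hP).2 hu1) (hmem P hP).2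
      (hmem P hP).2 (hmem Q hQ).2 (by simp; linarith)
    simpa using this
  have hNm : N = m * δ := by rw [hm]; field_simp
  have hm2 : 2 ≤ m := by nlinarith
  have hk0 : 0 < k := by linarith
  have hk1 : 1 < k := by linarith
  have hL : 0 ≤ Real.logb k m := Real.logb_nonneg hk1 (by linarith)
  set β := (2 * (k - 1) * m) ^ ((1 : ℝ) / 3) with hβ
  have hkm : 0 < 2 * (k - 1) * m := mul_pos (by linarith) (by linarith)
  have hβ0 : 0 < β := Real.rpow_pos_of_pos hkm _
  have hβ3 : β ^ 3 = 2 * (k - 1) * m := by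
    rw [hβ, ← Real.rpow_natCast, ← Real.rpow_mul hkm.le]
    norm_num
  refine final_estimate hk hm2 hβ ?_
  by_cases hfin : V.Finite
  swap
  · rw [Set.Infinite.ncard hfin]
    simp only [Nat.cast_zero]
    positivity
  lift V to Finset (ℝ × ℝ) using hfin with W
  simp only [Finset.mem_coe] at *
  rw [Set.ncard_coe_finset]
  have hone : ∀ T ⊆ W, (∀ P ∈ T, ∀ Q ∈ T, ¬ P.1 < Q.1) → T.card ≤ 1 := by
    intro T hT h
    rw [Finset.card_le_one]
    intro P hP Q hQ
    exact hinj P (hT hP) Q (hT hQ)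
      (le_antisymm (not_lt.1 (h Q hQ P hP)) (not_lt.1 (h P hP Q hQ)))
  have hA : (W.filter fun q => q.1 < δ).card ≤ 1 := by
    refine hone _ (Finset.filter_subset _ _) fun P hP Q hQ h => ?_
    rw [Finset.mem_filter] at hP hQ
    linarith [hgap1 P hP.1 Q hQ.1 h, (hpos P hP.1).1]
  have hB : (W.filter fun q => q.2 < δ).card ≤ 1 := by
    refine hone _ (Finset.filter_subset _ _) fun P hP Q hQ h => ?_
    rw [Finset.mem_filter] at hP hQ
    linarith [hgap2 P hP.1 Q hQ.1 h, (hpos Q hQ.1).2]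
  set G := W.filter fun q => δ ≤ q.1 ∧ δ ≤ q.2 with hG
  have hsplit : W.card ≤ G.card + 2 := by
    have hsub : W ⊆ G ∪ ((W.filter fun q => q.1 < δ) ∪ (W.filter fun q => q.2 < δ)) := by
      intro q hq
      simp only [hG, Finset.mem_union, Finset.mem_filter, hq, true_and]
      rcases lt_or_ge q.1 δ with h | h
      · exact Or.inr (Or.inl h)
      rcases lt_or_ge q.2 δ with h' | h'
      · exact Or.inr (Or.inr h')
      · exact Or.inl ⟨h, h'⟩
    have h1 := Finset.card_le_card hsub
    have h2 := Finset.card_union_le G ((W.filter fun q => q.1 < δ) ∪ (W.filter fun q => q.2 < δ))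
    have h3 := Finset.card_union_le (W.filter fun q => q.1 < δ) (W.filter fun q => q.2 < δ)
    omega
  -- The slab of `q` is the `j` with `δ k ^ j ≤ q.1 < δ k ^ (j + 1)`.
  set slab : ℝ × ℝ → ℕ := fun q => ⌊Real.logb k (q.1 / δ)⌋₊ with hslab
  have hfiber : ∀ j, ((G.filter fun q => slab q = j).card : ℝ) ≤ 2 + 5 * β / 3 := by
    intro j
    have hsubW : ∀ q ∈ G.filter fun q => slab q = j, q ∈ W := fun q hq =>
      (Finset.mem_filter.1 (Finset.mem_filter.1 hq).1).1
    have hbounds : ∀ q ∈ G.filter fun q => slab q = j, δ * k ^ j ≤ q.1 ∧ q.1 < δ * k ^ (j + 1) := by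
      intro q hq
      obtain ⟨hqG, hqj⟩ := Finset.mem_filter.1 hq
      have hq1 : δ ≤ q.1 := (Finset.mem_filter.1 hqG).2.1
      have hr : 1 ≤ q.1 / δ := (one_le_div hδ).2 hq1
      have hlog : 0 ≤ Real.logb k (q.1 / δ) := Real.logb_nonneg hk1 hr
      simp only [hslab] at hqj
      rw [Nat.floor_eq_iff hlog] at hqj
      obtain ⟨h1, h2⟩ := hqj
      rw [Real.le_logb_iff_rpow_le hk1 (by linarith), Real.rpow_natCast, le_div_iff₀ hδ] at h1
      rw [Real.logb_lt_iff_lt_rpow hk1 (by linarith), div_lt_iff₀ hδ] at h2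
      have h3 : k ^ ((j : ℝ) + 1) = k ^ (j + 1) := by
        rw [← Real.rpow_natCast]; push_cast; rfl
      rw [h3] at h2
      constructor <;> linarith
    refine card_chain_le _ δ β (2 * (k - 1) * N) hδ hβ0
      (fun P hP Q hQ h => hinj P (hsubW P hP) Q (hsubW Q hQ) h)
      (fun P hP Q hQ h => hanti P (hsubW P hP) Q (hsubW Q hQ) h) ?_ ?_ ?_
    · intro P hP Q hQ R hR h1 h2
      have hP' := hsubW P hP
      have hQ' := hsubW Q hQ
      have hR' := hsubW R hR
      rw [← Finset.mem_coe] at hP' hQ' hR'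
      have hpos' := extreme_below_chord hup (hV ▸ hP') (hV ▸ hQ') (hV ▸ hR') h1 h2
      have := detOf_le_cross (hmem R (hsubW R hR)).2 (hmem Q (hsubW Q hQ)).2
        (hmem P (hsubW P hP)).2 (hmem Q (hsubW Q hQ)).2 (by linarith)
      linarith
    · intro P hP Q hQ h
      obtain ⟨hP1, hP2⟩ := hpos P (hsubW P hP)
      obtain ⟨hQ1, hQ2⟩ := hpos Q (hsubW Q hQ)
      have hPN := hle P (hsubW P hP)
      have hx : Q.1 - P.1 ≤ (k - 1) * P.1 := by
        have h1 := (hbounds P hP).1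
        have h2 := (hbounds Q hQ).2
        have h3 : δ * k ^ (j + 1) = k * (δ * k ^ j) := by ring
        nlinarith
      calc (Q.1 - P.1) * (P.2 - Q.2) ≤ (Q.1 - P.1) * P.2 :=
            mul_le_mul_of_nonneg_left (by linarith) (by linarith)
        _ ≤ (k - 1) * P.1 * P.2 := mul_le_mul_of_nonneg_right hx hP2.le
        _ = (k - 1) * (P.1 * P.2) := by ring
        _ ≤ (k - 1) * (2 * N) := mul_le_mul_of_nonneg_left hPN (by linarith)
        _ = 2 * (k - 1) * N := by ring
    · rw [hβ3, hNm]
      exact le_of_eq (by ring)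
  have hmaps : ∀ q ∈ G, slab q ∈ Finset.range (⌊2 * Real.logb k m⌋₊ + 1) := by
    intro q hq
    obtain ⟨hqW, hq1, hq2⟩ := Finset.mem_filter.1 hq
    have hqN := hle q hqW
    rw [Finset.mem_range, Nat.lt_succ_iff]
    apply Nat.floor_le_floor
    have h2 : 2 * Real.logb k m = Real.logb k (m ^ 2) := by
      rw [Real.logb_pow]; norm_num
    rw [h2]
    apply Real.logb_le_logb_of_le hk1 (div_pos (by linarith) hδ)
    -- `q.1 δ ≤ q.1 q.2 ≤ 2 N ≤ N ^ 2 = m ^ 2 δ ^ 2`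
    rw [div_le_iff₀ hδ]
    have h3 : q.1 * δ ≤ q.1 * q.2 := mul_le_mul_of_nonneg_left hq2 (by linarith)
    have h4 : q.1 * δ ≤ m ^ 2 * δ * δ := by
      have : N * N = m ^ 2 * δ * δ := by rw [hNm]; ring
      nlinarith
    exact le_of_mul_le_mul_right h4 hδ
  have hcardG : (G.card : ℝ) ≤ (2 + 5 * β / 3) * (2 * Real.logb k m + 1) := by
    rw [Finset.card_eq_sum_card_fiberwise hmaps]
    push_cast
    calc _ ≤ ∑ _j ∈ Finset.range (⌊2 * Real.logb k m⌋₊ + 1), (2 + 5 * β / 3) :=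
          Finset.sum_le_sum fun j _ => hfiber j
      _ = (2 + 5 * β / 3) * ((⌊2 * Real.logb k m⌋₊ : ℝ) + 1) := by
          rw [Finset.sum_const, Finset.card_range, nsmul_eq_mul]; push_cast; ring
      _ ≤ _ := by
          have := Nat.floor_le (mul_nonneg two_pos.le hL)
          gcongr
  have : (W.card : ℝ) ≤ G.card + 2 := by exact_mod_cast hsplit
  linarith

end
end

section
/- Let a, b, c ∈ ℤ with Δ := √(b² − 4ac) a positive integer, let x₀, y₀ ∈ ℝ and n ∈ ℝ, n ≠ 0, and let h be the hyperbola {(x,y) : a(x−x₀)² + b(x−x₀)(y−y₀) + c(y−y₀)² = n}. Then there exists an invertible affine transformation of ℝ² sending h to the hyperbola {(x,y) : xy = |n|/Δ²} and sending ℤ² to p + Λ, where p ∈ ℝ² and Λ is a superlattice of ℤ² with det Λ = 1/Δ. Moreover, if gcd(a,b,c) = 1 then (1,0) and (0,1) are primitive vectors of Λ. -/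
/-!
Since `b² - 4ac = Δ²` is a perfect square, the quadratic form splits over `ℤ`
(`exists_int_factorization`): up to a global sign it is `(αx + βy)(γx + δy)` with integer
coefficients and `αδ - βγ = Δ`. The sign is chosen to agree with that of `n`, so that the
constant on the right becomes `|n|`. The affine map
`q ↦ (αx + βy, γx + δy) / Δ`, where `(x, y) = q - (x₀, y₀)`, then sends the hyperbola to
`xy = |n| / Δ²`, and its linear part sends `ℤ²` to the lattice `Λ` spanned by
`v = (α, γ) / Δ` and `w = (β, δ) / Δ`, of determinant `1 / Δ`. By Cramer's rule
`(1, 0) = δ v - γ w` and `(0, 1) = -β v + α w`, whence `ℤ² ⊆ Λ`. If `(1, 0)` or `(0, 1)` were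
`k` times a vector of `Λ`, then `k` would divide both coefficients of one linear factor, hence
each of `a, b, c`; this is impossible for `k ≥ 2` when `gcd(a, b, c) = 1`.
-/

noncomputable section

/-- An integral binary quadratic form whose discriminant is a square `Δ²` is a product of two
integral linear forms with determinant `Δ`. With `m = (b + Δ) / 2` and `k = (b - Δ) / 2` one has
`m * k = a * c`, and the coefficients come from a common refinement of these two
factorizations. -/
lemma exists_int_factorization (a b c Δ : ℤ) (h : Δ ^ 2 = b ^ 2 - 4 * a * c) :
    ∃ α β γ δ : ℤ, a = α * γ ∧ b = α * δ + β * γ ∧ c = β * δ ∧ α * δ - β * γ = Δ := by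
  have hpar : Even (b - Δ) := by
    have h2 : Even ((b - Δ) * (b + Δ)) := ⟨2 * a * c, by linear_combination -h⟩
    rcases Int.even_mul.1 h2 with h3 | h3
    · exact h3
    · have h4 : b - Δ = (b + Δ) - 2 * Δ := by ring
      rw [h4]
      exact h3.sub (even_two_mul Δ)
  obtain ⟨k, hk⟩ := hpar
  obtain ⟨m, hm⟩ : ∃ m, m = k + Δ := ⟨_, rfl⟩
  have hb : b = m + k := by linarith
  have hD : Δ = m - k := by linarith
  have hmk : m * k = a * c := by
    subst hb
    rw [hD] at h
    linarith
  suffices hs : ∃ α β γ δ : ℤ, a = α * γ ∧ m = α * δ ∧ k = β * γ ∧ c = β * δ by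
    obtain ⟨α, β, γ, δ, h1, h2, h3, h4⟩ := hs
    exact ⟨α, β, γ, δ, h1, by rw [hb, h2, h3], h4, by rw [hD, h2, h3]⟩
  by_cases ha : a = 0
  · subst ha
    rw [zero_mul] at hmk
    rcases mul_eq_zero.1 hmk with h0 | h0
    · exact ⟨0, 1, k, c, by simp, by simp [h0], by simp, by simp⟩
    · exact ⟨m, c, 0, 1, by simp, by simp, by simp [h0], by simp⟩
  · obtain ⟨α, γ, ⟨δ, hδ⟩, ⟨β, hβ⟩, rfl⟩ := exists_dvd_and_dvd_of_dvd_mul (Dvd.intro c hmk.symm)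
    refine ⟨α, β, γ, δ, rfl, hδ, by rw [hβ]; ring, mul_left_cancel₀ ha ?_⟩
    rw [← hmk, hδ, hβ]
    ring

/-- The linear automorphism `(x, y) ↦ (αx + βy, γx + δy) / D` of the plane, where `D` is the
determinant `αδ - βγ`. -/
def formEquiv (α β γ δ D : ℝ) (hD : D ≠ 0) (h : α * δ - β * γ = D) :
    (ℝ × ℝ) ≃ₗ[ℝ] ℝ × ℝ where
  toFun q := ((α * q.1 + β * q.2) / D, (γ * q.1 + δ * q.2) / D)
  invFun q := (δ * q.1 - β * q.2, α * q.2 - γ * q.1)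
  map_add' q r := by
    ext <;> simp <;> ring
  map_smul' t q := by
    ext <;> simp <;> ring
  left_inv q := by
    ext
    · simp only
      field_simp
      rw [← h]
      ring
    · simp only
      field_simp
      rw [← h]
      ring
  right_inv q := by
    ext
    · simp only
      field_simp
      rw [← h]
      ring
    · simp only
      field_simp
      rw [← h]
      ring

/-- Coordinates of a real combination of the basis vectors `(α, γ) / D` and `(β, δ) / D` of the
lattice. -/
lemma comb_eq (α β γ δ D s t : ℝ) :
    s • ((α / D, γ / D) : ℝ × ℝ) + t • ((β / D, δ / D) : ℝ × ℝ)
      = ((α * s + β * t) / D, (γ * s + δ * t) / D) := by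
  ext <;> simp <;> ring

/-- A lattice vector with coprime integer coordinates in the basis `v, w` is primitive. -/
lemma isPrimitiveVec_of_coords {v w u : ℝ × ℝ} (hvw : v.1 * w.2 - v.2 * w.1 ≠ 0) (s t : ℤ)
    (hu : u = (s : ℝ) • v + (t : ℝ) • w) (hst : ∀ k : ℤ, k ∣ s → k ∣ t → k ∣ 1) :
    IsPrimitiveVec (latticeOf v w) u := by
  refine ⟨⟨s, t, hu⟩, ?_⟩
  rintro _ ⟨i, j, rfl⟩ k hk heq
  rw [hu] at heq
  have e1 := congrArg Prod.fst heq
  have e2 := congrArg Prod.snd heq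
  simp only [Prod.fst_add, Prod.snd_add, Prod.smul_fst, Prod.smul_snd, smul_eq_mul] at e1 e2
  have hs : (s : ℝ) = k * i := by
    apply mul_right_cancel₀ hvw
    linear_combination w.2 * e1 - w.1 * e2
  have ht : (t : ℝ) = k * j := by
    apply mul_right_cancel₀ hvw
    linear_combination v.1 * e2 - v.2 * e1
  have := Int.le_of_dvd one_pos
    (hst k ⟨i, by exact_mod_cast hs⟩ ⟨j, by exact_mod_cast ht⟩)
  omega

/-- There is an invertible affine transformation of `ℝ²` sending the hyperbola `h` to
`{xy = |n|/Δ²}` and sending `ℤ²` to `p + Λ`, where `Λ ⊇ ℤ²` is a superlattice with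
`det Λ = 1/Δ`; moreover if `gcd(a,b,c) = 1` then `(1,0)` and `(0,1)` are primitive
vectors of `Λ`. -/
theorem statement5 (a b c Δ : ℤ) (hΔ : 0 < Δ)
    (hdisc : (Δ : ℝ) = Real.sqrt ((b : ℝ) ^ 2 - 4 * (a : ℝ) * (c : ℝ)))
    (x₀ y₀ n : ℝ) (hn : n ≠ 0) :
    ∃ (f : (ℝ × ℝ) ≃ᵃ[ℝ] ℝ × ℝ) (p v w : ℝ × ℝ),
      v.1 * w.2 - v.2 * w.1 ≠ 0 ∧
      intLattice ⊆ latticeOf v w ∧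
      detOf v w = 1 / (Δ : ℝ) ∧
      (f '' hypSet a b c x₀ y₀ n) = {q : ℝ × ℝ | q.1 * q.2 = |n| / (Δ : ℝ) ^ 2} ∧
      (f '' intLattice) = translateSet p (latticeOf v w) ∧
      (Int.gcd a (Int.gcd b c) = 1 →
        IsPrimitiveVec (latticeOf v w) (1, 0) ∧ IsPrimitiveVec (latticeOf v w) (0, 1)) := by
  have hΔR : (Δ : ℝ) ≠ 0 := by exact_mod_cast hΔ.ne'
  have hsq : (Δ : ℝ) ^ 2 = (b : ℝ) ^ 2 - 4 * a * c := by
    have hpos : 0 < Real.sqrt ((b : ℝ) ^ 2 - 4 * (a : ℝ) * (c : ℝ)) := by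
      rw [← hdisc]
      exact_mod_cast hΔ
    rw [hdisc, Real.sq_sqrt (Real.sqrt_pos.1 hpos).le]
  have hsqZ : Δ ^ 2 = b ^ 2 - 4 * a * c := by exact_mod_cast hsq
  -- `ε` is the sign of `n`; the form to be factored is `ε` times the given one.
  obtain ⟨ε, hε, hεn⟩ : ∃ ε : ℤ, ε * ε = 1 ∧ |n| = ε * n := by
    rcases abs_choice n with h | h
    · exact ⟨1, by norm_num, by rw [h]; simp⟩
    · exact ⟨-1, by norm_num, by rw [h]; simp⟩
  obtain ⟨α, β, γ, δ, ha, hb, hc, hdet⟩ :=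
    exists_int_factorization (ε * a) (ε * b) (ε * c) Δ
      (by linear_combination hsqZ - (b ^ 2 - 4 * a * c) * hε)
  have hdetR : (α : ℝ) * δ - β * γ = Δ := by exact_mod_cast hdet
  have haR : (ε : ℝ) * a = α * γ := by exact_mod_cast ha
  have hbR : (ε : ℝ) * b = α * δ + β * γ := by exact_mod_cast hb
  have hcR : (ε : ℝ) * c = β * δ := by exact_mod_cast hc
  have hεR : (ε : ℝ) * ε = 1 := by exact_mod_cast hε
  have hvw : (α / Δ : ℝ) * (δ / Δ) - γ / Δ * (β / Δ) = 1 / Δ := by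
    field_simp
    linear_combination hdetR
  have hvw0 : (α / Δ : ℝ) * (δ / Δ) - γ / Δ * (β / Δ) ≠ 0 := by
    rw [hvw]
    exact one_div_ne_zero hΔR
  let L := formEquiv α β γ δ Δ hΔR hdetR
  have hL : ∀ q : ℝ × ℝ, L q = ((α * q.1 + β * q.2) / Δ, (γ * q.1 + δ * q.2) / Δ) :=
    fun q => rfl
  let f : (ℝ × ℝ) ≃ᵃ[ℝ] ℝ × ℝ :=
    (AffineEquiv.constVAdd ℝ (ℝ × ℝ) (-(x₀, y₀))).trans L.toAffineEquiv
  have hf : ∀ q : ℝ × ℝ, f q = L (-(x₀, y₀) + q) := fun q => rfl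
  -- A common divisor of `ε * a`, `ε * b`, `ε * c` divides `a`, `b`, `c` because `ε` is a unit.
  have hcop : Int.gcd a (Int.gcd b c) = 1 → ∀ k : ℤ, k ∣ α * γ → k ∣ α * δ + β * γ →
      k ∣ β * δ → k ∣ 1 := by
    intro hg k h1 h2 h3
    rw [← ha] at h1
    rw [← hb] at h2
    rw [← hc] at h3
    have hunit : ∀ z : ℤ, k ∣ ε * z → k ∣ z := fun z hz => by
      have h4 := hz.mul_left ε
      rwa [← mul_assoc, hε, one_mul] at h4
    have h5 := Int.dvd_coe_gcd (hunit a h1) (Int.dvd_coe_gcd (hunit b h2) (hunit c h3))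
    rwa [hg] at h5
  refine ⟨f, L (-(x₀, y₀)), (α / Δ, γ / Δ), (β / Δ, δ / Δ), hvw0, ?_, ?_, ?_, ?_, ?_⟩
  · rintro _ ⟨s, t, rfl⟩
    refine ⟨δ * s - β * t, α * t - γ * s, ?_⟩
    rw [comb_eq]
    push_cast
    ext
    · simp only
      rw [eq_div_iff hΔR]
      linear_combination -s * hdetR
    · simp only
      rw [eq_div_iff hΔR]
      linear_combination -t * hdetR
  · simp only [detOf]
    rw [hvw, abs_of_pos]
    have : (0 : ℝ) < Δ := by exact_mod_cast hΔ
    positivity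
  · have key : ∀ q : ℝ × ℝ, q ∈ hypSet a b c x₀ y₀ n ↔
        (f q).1 * (f q).2 = |n| / (Δ : ℝ) ^ 2 := by
      intro q
      rw [hf, hL, hεn]
      simp only [hypSet, Set.mem_ofPred_eq, Prod.fst_add, Prod.snd_add, Prod.fst_neg, Prod.snd_neg]
      rw [div_mul_div_comm, ← sq, div_left_inj' (pow_ne_zero 2 hΔR)]
      have hε0 : (ε : ℝ) ≠ 0 := left_ne_zero_of_mul_eq_one hεR
      rw [← mul_right_inj' hε0]
      have : (ε : ℝ) * (a * (q.1 - x₀) ^ 2 + b * (q.1 - x₀) * (q.2 - y₀) + c * (q.2 - y₀) ^ 2)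
          = (α * (-x₀ + q.1) + β * (-y₀ + q.2)) * (γ * (-x₀ + q.1) + δ * (-y₀ + q.2)) := by
        linear_combination (q.1 - x₀) ^ 2 * haR + (q.1 - x₀) * (q.2 - y₀) * hbR
          + (q.2 - y₀) ^ 2 * hcR
      rw [this]
    ext q
    constructor
    · rintro ⟨r, hr, rfl⟩
      exact (key r).1 hr
    · intro hq
      exact ⟨f.symm q, (key _).2 (by simpa using hq), by simp⟩
  · have hlat : ∀ s t : ℤ, f ((s : ℝ), (t : ℝ)) = L (-(x₀, y₀)) +
        ((s : ℝ) • ((α / Δ, γ / Δ) : ℝ × ℝ) + (t : ℝ) • ((β / Δ, δ / Δ) : ℝ × ℝ)) := by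
      intro s t
      rw [hf, map_add, comb_eq, hL ((s : ℝ), (t : ℝ))]
    ext q
    constructor
    · rintro ⟨_, ⟨s, t, rfl⟩, rfl⟩
      exact ⟨_, ⟨s, t, rfl⟩, (hlat s t).symm⟩
    · rintro ⟨_, ⟨s, t, rfl⟩, rfl⟩
      exact ⟨_, ⟨s, t, rfl⟩, hlat s t⟩
  · intro hg
    constructor
    · refine isPrimitiveVec_of_coords hvw0 δ (-γ) ?_ fun k h1 h2 => ?_
      · rw [comb_eq]
        push_cast
        ext
        · simp only
          rw [eq_div_iff hΔR]
          linear_combination -hdetR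
        · simp only
          ring
      · rw [dvd_neg] at h2
        exact hcop hg k (h2.mul_left _) (dvd_add (h1.mul_left _) (h2.mul_left _)) (h1.mul_left _)
    · refine isPrimitiveVec_of_coords hvw0 (-β) α ?_ fun k h1 h2 => ?_
      · rw [comb_eq]
        push_cast
        ext
        · simp only
          ring
        · simp only
          rw [eq_div_iff hΔR]
          linear_combination -hdetR
      · rw [dvd_neg] at h1
        exact hcop hg k (h2.mul_right _) (dvd_add (h2.mul_right _) (h1.mul_right _))
          (h1.mul_right _)

end
end

section
/- Let n ∈ ℝ_{>0}, p ∈ ℝ², and let Λ ⊇ ℤ² be a superlattice of ℤ². Every vertex of conv(H_n ∩ (p+Λ)), except for the vertex of smallest x-coordinate and the vertex of smallest y-coordinate, lies in the open square (det Λ, n/det Λ + 1)². -/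
/-!
Write `d = det Λ` and `S = H_n ∩ (p + Λ)`. Extreme points of `conv S` belong to `S`.

If `q'` is a vertex strictly below `q`, then `u = q - q' ∈ Λ` has `u.2 > 0`. Since `(1, 0) ∈ Λ`, the
number `u.2 = det((1, 0), u)` is an integer multiple of `d`, hence `u.2 ≥ d`; as `q'.2 > 0`, this
gives `q.2 > d`. Moreover `q - (1, 0)` cannot lie in `H_n`: otherwise `q` would be the midpoint of
the two points `q ± (1, 0)` of `S`. Hence `q.1 - 1 < n / q.2 < n / d`. The two remaining bounds
follow by exchanging the coordinates, using a vertex strictly to the left of `q`.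
-/

noncomputable section

lemma latticeOf_add {v w a b : ℝ × ℝ} (ha : a ∈ latticeOf v w) (hb : b ∈ latticeOf v w) :
    a + b ∈ latticeOf v w := by
  obtain ⟨i, j, rfl⟩ := ha
  obtain ⟨k, l, rfl⟩ := hb
  exact ⟨i + k, j + l, by push_cast; module⟩

lemma latticeOf_neg {v w a : ℝ × ℝ} (ha : a ∈ latticeOf v w) : -a ∈ latticeOf v w := by
  obtain ⟨i, j, rfl⟩ := ha
  exact ⟨-i, -j, by push_cast; module⟩

/-- The determinant of two lattice vectors is an integer multiple of the covolume, so it is at least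
the covolume as soon as it is positive. -/
lemma detOf_le_of_pos {v w a b : ℝ × ℝ} (ha : a ∈ latticeOf v w) (hb : b ∈ latticeOf v w)
    (hpos : 0 < a.1 * b.2 - a.2 * b.1) : detOf v w ≤ a.1 * b.2 - a.2 * b.1 := by
  obtain ⟨i, j, rfl⟩ := ha
  obtain ⟨k, l, rfl⟩ := hb
  have key : ((i : ℝ) • v + (j : ℝ) • w).1 * ((k : ℝ) • v + (l : ℝ) • w).2 -
      ((i : ℝ) • v + (j : ℝ) • w).2 * ((k : ℝ) • v + (l : ℝ) • w).1 =
      ((i * l - j * k : ℤ) : ℝ) * (v.1 * w.2 - v.2 * w.1) := by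
    simp only [Prod.fst_add, Prod.snd_add, Prod.smul_fst, Prod.smul_snd, smul_eq_mul]
    push_cast
    ring
  rw [key] at hpos ⊢
  rw [← abs_of_pos hpos, abs_mul]
  have hm : i * l - j * k ≠ 0 := by
    intro h
    rw [h] at hpos
    simp at hpos
  have h1 : (1 : ℝ) ≤ |((i * l - j * k : ℤ) : ℝ)| := by
    exact_mod_cast Int.one_le_abs hm
  exact le_mul_of_one_le_left (abs_nonneg _) h1

lemma translateSet_add_s6 {p v w q e : ℝ × ℝ} (hq : q ∈ translateSet p (latticeOf v w))
    (he : e ∈ latticeOf v w) : q + e ∈ translateSet p (latticeOf v w) := by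
  obtain ⟨a, ha, rfl⟩ := hq
  exact ⟨a + e, latticeOf_add ha he, (add_assoc p a e).symm⟩

lemma sub_mem_latticeOf {p v w q r : ℝ × ℝ} (hq : q ∈ translateSet p (latticeOf v w))
    (hr : r ∈ translateSet p (latticeOf v w)) : q - r ∈ latticeOf v w := by
  obtain ⟨a, ha, rfl⟩ := hq
  obtain ⟨b, hb, rfl⟩ := hr
  have h : (p + a) - (p + b) = a + -b := by abel
  simpa only [h] using latticeOf_add ha (latticeOf_neg hb)

lemma eq_zero_of_extreme {S : Set (ℝ × ℝ)} {q e : ℝ × ℝ}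
    (hq : q ∈ Set.extremePoints ℝ (convexHull ℝ S)) (h1 : q + -e ∈ S) (h2 : q + e ∈ S) :
    e = 0 := by
  have hmid : q ∈ openSegment ℝ (q + -e) (q + e) :=
    ⟨1 / 2, 1 / 2, by norm_num, by norm_num, by norm_num, by module⟩
  have h := hq.2 (subset_convexHull ℝ S h1) (subset_convexHull ℝ S h2) hmid
  simpa using h

lemma Hset_pos {n : ℝ} (hn : 0 < n) {q : ℝ × ℝ} (hq : q ∈ Hset n) : 0 < q.1 ∧ 0 < q.2 := by
  obtain ⟨h1, h2, h3⟩ := hq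
  have h := hn.trans_le h3
  exact ⟨pos_of_mul_pos_left h h2, pos_of_mul_pos_right h h1⟩

lemma lt_div_add_one {n d x y : ℝ} (hn : 0 < n) (hd : 0 < d) (hy : d < y)
    (h : (x - 1) * y < n) : x < n / d + 1 := by
  have h1 : x - 1 < n / y := (lt_div_iff₀ (hd.trans hy)).2 h
  have h2 : n / y < n / d := div_lt_div_of_pos_left hn hd hy
  linarith

/-- Every vertex of `conv(H_n ∩ (p + Λ))`, except for the vertex of smallest
`x`-coordinate and the vertex of smallest `y`-coordinate, lies in the open square
`(det Λ, n/det Λ + 1)²`. -/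
theorem statement6 (n : ℝ) (hn : 0 < n) (p v w : ℝ × ℝ)
    (hvw : v.1 * w.2 - v.2 * w.1 ≠ 0)
    (hsup : intLattice ⊆ latticeOf v w)
    (q : ℝ × ℝ)
    (hq : q ∈ Set.extremePoints ℝ
        (convexHull ℝ (Hset n ∩ translateSet p (latticeOf v w))))
    (hnotminx : ∃ q' ∈ Set.extremePoints ℝ
        (convexHull ℝ (Hset n ∩ translateSet p (latticeOf v w))), q'.1 < q.1)
    (hnotminy : ∃ q' ∈ Set.extremePoints ℝ
        (convexHull ℝ (Hset n ∩ translateSet p (latticeOf v w))), q'.2 < q.2) :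
    q.1 ∈ Set.Ioo (detOf v w) (n / detOf v w + 1) ∧
    q.2 ∈ Set.Ioo (detOf v w) (n / detOf v w + 1) := by
  set S := Hset n ∩ translateSet p (latticeOf v w) with hS
  have hd : 0 < detOf v w := abs_pos.2 hvw
  have e1 : ((1, 0) : ℝ × ℝ) ∈ latticeOf v w := hsup ⟨1, 0, by simp⟩
  have e2 : ((0, 1) : ℝ × ℝ) ∈ latticeOf v w := hsup ⟨0, 1, by simp⟩
  have hqS : q ∈ S := extremePoints_convexHull_subset hq
  obtain ⟨a, ha, hax⟩ := hnotminx
  obtain ⟨b, hb, hby⟩ := hnotminy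
  have haS : a ∈ S := extremePoints_convexHull_subset ha
  have hbS : b ∈ S := extremePoints_convexHull_subset hb
  have ha0 := Hset_pos hn haS.1
  have hb0 := Hset_pos hn hbS.1
  have hq0 := Hset_pos hn hqS.1
  have hqn : n ≤ q.1 * q.2 := hqS.1.2.2
  have hx : detOf v w < q.1 := by
    have h := detOf_le_of_pos (sub_mem_latticeOf hqS.2 haS.2) e2 (by simpa using hax)
    simp only [Prod.fst_sub, Prod.snd_sub, mul_one, mul_zero, sub_zero] at h
    linarith [ha0.1]
  have hy : detOf v w < q.2 := by
    have h := detOf_le_of_pos e1 (sub_mem_latticeOf hqS.2 hbS.2) (by simpa using hby)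
    simp only [Prod.snd_sub, one_mul, zero_mul, sub_zero] at h
    linarith [hb0.2]
  have hx' : (q.1 - 1) * q.2 < n := by
    by_contra! hc
    have hnn : 0 ≤ q.1 - 1 := (pos_of_mul_pos_left (hn.trans_le hc) hq0.2.le).le
    have h := eq_zero_of_extreme (e := (1, 0)) hq
      ⟨⟨by simpa using hnn, by simpa using hq0.2.le, by simpa [sub_eq_add_neg] using hc⟩,
        translateSet_add_s6 hqS.2 (latticeOf_neg e1)⟩
      ⟨⟨by simpa using by linarith, by simpa using hq0.2.le, by simp; nlinarith⟩,
        translateSet_add_s6 hqS.2 e1⟩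
    simp at h
  have hy' : (q.2 - 1) * q.1 < n := by
    by_contra! hc
    have hnn : 0 ≤ q.2 - 1 := (pos_of_mul_pos_left (hn.trans_le hc) hq0.1.le).le
    have h := eq_zero_of_extreme (e := (0, 1)) hq
      ⟨⟨by simpa using hq0.1.le, by simpa using hnn,
        by simpa [sub_eq_add_neg, mul_comm] using hc⟩,
        translateSet_add_s6 hqS.2 (latticeOf_neg e2)⟩
      ⟨⟨by simpa using hq0.1.le, by simpa using by linarith, by simp; nlinarith⟩,
        translateSet_add_s6 hqS.2 e2⟩
    simp at h
  exact ⟨⟨hx, lt_div_add_one hn hd hy hx'⟩, ⟨hy, lt_div_add_one hn hd hx hy'⟩⟩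

end
end
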